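/- arXiv:1402.6370 — 5 statements merged into one kernel-verified Lean document; each statement's English description precedes it below -/
import Mathlib

section
/- Let n ≥ 1 and let B be a real symmetric positive-semidefinite n×n matrix. Then the infimum of the set { trace(A·Aᵀ·B) : A a real n×n matrix with det A = 1 } equals n·(det B)^{1/n}. -/
open Matrix

/-!
If `det A = 1`, the positive semidefinite matrix `Aᴴ B A` has the determinant of `B` and the trace
of `A Aᴴ B`, so AM-GM for its eigenvalues gives the lower bound. For positive definite `B` the bound
is attained: the multiple `c B⁻¹` of determinant one is `A Aᴴ` for its square root `A`, and then
`A Aᴴ B = c I`. A singular `B` is approximated by `B + ε I`, whose traces dominate those of `B`.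
-/

section UnimodularTrace

open scoped ComplexOrder

variable {ι 𝕜 : Type*} [Fintype ι] [DecidableEq ι] [RCLike 𝕜]

theorem card_mul_re_det_rpow_le_re_trace [Nonempty ι] {C : Matrix ι ι 𝕜} (hC : C.PosSemidef) :
    Fintype.card ι * RCLike.re C.det ^ ((1 : ℝ) / Fintype.card ι) ≤ RCLike.re C.trace := by
  have card_pos : (0 : ℝ) < Fintype.card ι := by exact_mod_cast Fintype.card_pos
  have re_det : RCLike.re C.det = ∏ i, hC.1.eigenvalues i := by
    rw [hC.1.det_eq_prod_eigenvalues, ← RCLike.ofReal_prod, RCLike.ofReal_re]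
  have re_trace : RCLike.re C.trace = ∑ i, hC.1.eigenvalues i := by
    rw [hC.1.trace_eq_sum_eigenvalues, ← RCLike.ofReal_sum, RCLike.ofReal_re]
  have am_gm := Real.geom_mean_le_arith_mean Finset.univ (fun _ => 1) hC.1.eigenvalues
    (by simp) (by simpa using card_pos) (fun i _ => hC.eigenvalues_nonneg i)
  rw [re_det, re_trace, ← le_div_iff₀' card_pos]
  simpa using am_gm

theorem card_mul_re_det_rpow_le_re_trace_mul_conjTranspose_mul [Nonempty ι] {A B : Matrix ι ι 𝕜}
    (hA : A.det = 1) (hB : B.PosSemidef) :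
    Fintype.card ι * RCLike.re B.det ^ ((1 : ℝ) / Fintype.card ι) ≤
      RCLike.re (A * Aᴴ * B).trace := by
  have det_congr : (Aᴴ * B * A).det = B.det := by
    rw [det_mul, det_mul, det_conjTranspose, hA, star_one, one_mul, mul_one]
  have trace_congr : (Aᴴ * B * A).trace = (A * Aᴴ * B).trace := by
    rw [trace_mul_comm, Matrix.mul_assoc]
  simpa only [det_congr, trace_congr] using
    card_mul_re_det_rpow_le_re_trace (hB.conjTranspose_mul_mul_same A)

open scoped MatrixOrder in
theorem exists_det_eq_one_and_mul_conjTranspose_eq {M : Matrix ι ι 𝕜} (hM : M.PosSemidef)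
    (hdet : M.det = 1) : ∃ A : Matrix ι ι 𝕜, A.det = 1 ∧ A * Aᴴ = M := by
  have sqrt_isHermitian : (CFC.sqrt M).IsHermitian := (CFC.sqrt_nonneg M).posSemidef.1
  refine ⟨CFC.sqrt M, ?_, ?_⟩
  · rw [hM.det_sqrt, hdet, RCLike.sqrt_one]
  · rw [sqrt_isHermitian.eq, CFC.sqrt_mul_sqrt_self M hM.nonneg]

theorem exists_det_eq_one_and_mul_conjTranspose_mul_eq_smul_one [Nonempty ι] {C : Matrix ι ι 𝕜}
    (hC : C.PosDef) : ∃ A : Matrix ι ι 𝕜, A.det = 1 ∧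
      A * Aᴴ * C = (RCLike.re C.det ^ ((1 : ℝ) / Fintype.card ι)) • (1 : Matrix ι ι 𝕜) := by
  obtain ⟨d, d_pos, det_eq⟩ := RCLike.pos_iff_exists_ofReal.mp hC.det_pos
  rw [← det_eq, RCLike.ofReal_re, one_div]
  set c : ℝ := d ^ (Fintype.card ι : ℝ)⁻¹
  have c_pos : 0 < c := Real.rpow_pos_of_pos d_pos _
  have c_pow : c ^ Fintype.card ι = d := Real.rpow_inv_natCast_pow d_pos.le Fintype.card_ne_zero
  have det_unit : IsUnit C.det := hC.det_pos.ne'.isUnit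
  have det_smul_inv : (c • C⁻¹).det = 1 := by
    rw [det_smul_of_tower, c_pow, RCLike.real_smul_eq_coe_mul, det_eq, det_nonsing_inv,
      Ring.mul_inverse_cancel _ det_unit]
  obtain ⟨A, hA, hAA⟩ :=
    exists_det_eq_one_and_mul_conjTranspose_eq (hC.inv.smul c_pos).posSemidef det_smul_inv
  exact ⟨A, hA, by rw [hAA, Matrix.smul_mul, nonsing_inv_mul C det_unit]⟩

theorem exists_det_eq_one_and_re_trace_eq [Nonempty ι] {C : Matrix ι ι 𝕜} (hC : C.PosDef) :
    ∃ A : Matrix ι ι 𝕜, A.det = 1 ∧ RCLike.re (A * Aᴴ * C).trace =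
      Fintype.card ι * RCLike.re C.det ^ ((1 : ℝ) / Fintype.card ι) := by
  obtain ⟨A, hA, hAC⟩ := exists_det_eq_one_and_mul_conjTranspose_mul_eq_smul_one hC
  refine ⟨A, hA, ?_⟩
  rw [hAC, trace_smul, trace_one, RCLike.smul_re, RCLike.natCast_re, mul_comm]

theorem re_trace_mul_conjTranspose_mul_le_add_smul_one (A B : Matrix ι ι 𝕜) {ε : ℝ} (hε : 0 ≤ ε) :
    RCLike.re (A * Aᴴ * B).trace ≤ RCLike.re (A * Aᴴ * (B + ε • 1)).trace := by
  have trace_nonneg : 0 ≤ RCLike.re (A * Aᴴ).trace :=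
    (RCLike.nonneg_iff.mp (posSemidef_self_mul_conjTranspose A).trace_nonneg).1
  rw [Matrix.mul_add, trace_add, map_add, Matrix.mul_smul, Matrix.mul_one, trace_smul,
    RCLike.smul_re]
  exact le_add_of_nonneg_right (mul_nonneg hε trace_nonneg)

theorem continuous_re_det_add_smul_one_rpow (B : Matrix ι ι 𝕜) {p : ℝ} (hp : 0 ≤ p) :
    Continuous fun ε : ℝ => RCLike.re (B + ε • 1).det ^ p := by
  have continuous_det : Continuous fun ε : ℝ => (B + ε • 1).det :=
    Continuous.matrix_det (by fun_prop)
  exact (RCLike.continuous_re.comp continuous_det).rpow_const fun _ => Or.inr hp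

theorem stmt8_general [Nonempty ι] {B : Matrix ι ι 𝕜} (hB : B.PosSemidef) :
    IsGLB {z : ℝ | ∃ A : Matrix ι ι 𝕜, A.det = 1 ∧ z = RCLike.re (A * Aᴴ * B).trace}
      (Fintype.card ι * RCLike.re B.det ^ ((1 : ℝ) / Fintype.card ι)) := by
  refine ⟨?_, fun m hm => ?_⟩
  · rintro _ ⟨A, hA, rfl⟩
    exact card_mul_re_det_rpow_le_re_trace_mul_conjTranspose_mul hA hB
  let bound (ε : ℝ) : ℝ :=
    Fintype.card ι * RCLike.re (B + ε • 1).det ^ ((1 : ℝ) / Fintype.card ι)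
  have le_bound : ∀ ε : ℝ, 0 < ε → m ≤ bound ε := fun ε hε => by
    obtain ⟨A, hA, trace_eq⟩ := exists_det_eq_one_and_re_trace_eq
      (PosDef.posSemidef_add hB (PosDef.one.smul hε))
    calc m ≤ RCLike.re (A * Aᴴ * B).trace := hm ⟨A, hA, rfl⟩
      _ ≤ RCLike.re (A * Aᴴ * (B + ε • 1)).trace :=
        re_trace_mul_conjTranspose_mul_le_add_smul_one A B hε.le
      _ = bound ε := trace_eq
  have bound_continuous : Continuous bound :=
    continuous_const.mul (continuous_re_det_add_smul_one_rpow B (by positivity))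
  have le_bound_zero : m ≤ bound 0 :=
    ge_of_tendsto (bound_continuous.continuousWithinAt (s := Set.Ioi 0)).tendsto
      (Filter.eventually_of_mem self_mem_nhdsWithin le_bound)
  simpa only [bound, zero_smul, add_zero] using le_bound_zero

end UnimodularTrace

theorem stmt8 (n : ℕ) (hn : 1 ≤ n) (B : Matrix (Fin n) (Fin n) ℝ) (hB : B.PosSemidef) :
    sInf {z : ℝ | ∃ A : Matrix (Fin n) (Fin n) ℝ, A.det = 1 ∧ z = (A * Aᵀ * B).trace} =
      n * B.det ^ ((1 : ℝ) / n) := by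
  have : Nonempty (Fin n) := ⟨⟨0, hn⟩⟩
  simpa [conjTranspose_eq_transpose_of_trivial] using
    (stmt8_general hB).csInf_eq ⟨_, 1, det_one, rfl⟩
end

section
/- Let n ≥ 1 and let u : ℝⁿ → ℝ be convex, twice continuously differentiable, and Lipschitz continuous. Fix x ∈ ℝⁿ. Then, as s → 1 from the left (with 1/2 < s < 1), (1−s)·D_s u(x) converges to (ω_n/(4n))·inf{ trace(A·Aᵀ·D²u(x)) : A symmetric positive definite, det A = 1 }, where D²u(x) is the Hessian matrix of u at x. -/
open MeasureTheory

noncomputable def surfOmega (k : ℕ) : ℝ := 2 * Real.pi ^ ((k : ℝ) / 2) / Real.Gamma ((k : ℝ) / 2)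

noncomputable def mu1 (s L C : ℝ) : ℝ := L ^ (2 - 2 * s) * (C / 2) ^ (2 * s - 1) / (2 * s - 1)

noncomputable def C1 (n : ℕ) (s L C : ℝ) : ℝ :=
  (Real.sqrt Real.pi * Real.Gamma (((n : ℝ) - 1) / 2 + s) / Real.Gamma ((n : ℝ) / 2 + s)) *
    (mu1 s L C * surfOmega (n - 1) / 2)

noncomputable def C2 (n : ℕ) (s : ℝ) : ℝ :=
  surfOmega (n - 1) * Real.Gamma (((n : ℝ) - 1) / 2) * Real.Gamma (s + 1 / 2) /
    (2 * Real.Gamma ((n : ℝ) / 2 + s))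

noncomputable def mu0 (n : ℕ) (s L C η₀ : ℝ) : ℝ :=
  C1 n s L C ^ (1 - (n : ℝ)) * (C2 n s)⁻¹ * (η₀ / 2) ^ (n : ℝ)

/-- Second-order increment `δ(u,x,y) = u(x+y) + u(x-y) - 2u(x)`. -/
noncomputable def delta2 {n : ℕ} (u : EuclideanSpace ℝ (Fin n) → ℝ)
    (x y : EuclideanSpace ℝ (Fin n)) : ℝ :=
  u (x + y) + u (x - y) - 2 * u x

/-- Integrand `δ(u,x,y)/|A⁻¹ y|^(n+2s)`. -/
noncomputable def kernelA {n : ℕ} (s : ℝ) (A : Matrix (Fin n) (Fin n) ℝ)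
    (u : EuclideanSpace ℝ (Fin n) → ℝ) (x y : EuclideanSpace ℝ (Fin n)) : ℝ :=
  delta2 u x y /
    ‖(EuclideanSpace.equiv (Fin n) ℝ).symm (A⁻¹.mulVec (EuclideanSpace.equiv (Fin n) ℝ y))‖ ^
      ((n : ℝ) + 2 * s)

/-- The linear operator `L_A u(x) = (1/2) ∫ δ(u,x,y)/|A⁻¹ y|^(n+2s) dy`. -/
noncomputable def LA {n : ℕ} (s : ℝ) (A : Matrix (Fin n) (Fin n) ℝ)
    (u : EuclideanSpace ℝ (Fin n) → ℝ) (x : EuclideanSpace ℝ (Fin n)) : ℝ :=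
  (1 / 2) * ∫ y, kernelA s A u x y


open Matrix Filter

/-- Hessian matrix of `u` at `x`, with entries the second partial derivatives. -/
noncomputable def hess {n : ℕ} (u : EuclideanSpace ℝ (Fin n) → ℝ)
    (x : EuclideanSpace ℝ (Fin n)) : Matrix (Fin n) (Fin n) ℝ :=
  Matrix.of fun i j =>
    fderiv ℝ (fun z => fderiv ℝ u z (EuclideanSpace.single j (1 : ℝ))) x
      (EuclideanSpace.single i (1 : ℝ))

/-!
The substitution `y = A z` turns `L_A u(x)` into `½ ∫ δ(u, x, A z) / |z| ^ (n + 2s) dz`. As `s → 1`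
the weights `(1 - s) / |z| ^ (n + 2s)` concentrate at the origin, where `δ(u, x, y)` is
`⟨y, D²u(x) y⟩ + o(|y|²)`, and second moments of radial weights are isotropic; this gives
`(1 - s) L_A u(x) → ω_n / (4n) * tr (A Aᵀ D²u(x))` for every fixed `A`.

To exchange the limit with the infimum one needs a lower bound that is uniform in `A`. If
`D²u(x) ≥ l > 0`, the part `|z| < r / ‖A‖` of the integral is at least a constant close to
`ω_n / (2n)` times `F (r / ‖A‖) ^ (2 - 2s)` with `F = tr (A Aᵀ D²u(x)) ≥ l ‖A‖²`. Hence it is at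
least a constant times `(r² l) ^ (1 - s) F ^ s`, in which `A` enters only through `F`, and `F` is
bounded below by its infimum. If `D²u(x)` has a null direction `v`, stretching along `v` while
flattening its orthogonal complement shows that the limiting infimum is `0`, and `δ ≥ 0` suffices.
-/

open Set Metric Module Topology Asymptotics
open scoped RealInnerProductSpace

lemma tendsto_iInf_of_forall_lt_eventually_le {ι α : Type*} [Nonempty α] {l : Filter ι}
    {F : ι → α → ℝ} {G : α → ℝ} (hlim : ∀ a, Tendsto (F · a) l (𝓝 (G a)))
    (hlow : ∀ b < ⨅ a, G a, ∀ᶠ i in l, ∀ a, b ≤ F i a) :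
    Tendsto (fun i => ⨅ a, F i a) l (𝓝 (⨅ a, G a)) := by
  refine tendsto_order.2 ⟨fun b hb => ?_, fun c hc => ?_⟩
  · obtain ⟨b', hbb', hb'⟩ := exists_between hb
    filter_upwards [hlow b' hb'] with i hi using hbb'.trans_le (le_ciInf hi)
  · obtain ⟨a, ha⟩ := exists_lt_of_ciInf_lt hc
    filter_upwards [(hlim a).eventually_lt_const ha, hlow _ (sub_one_lt _)] with i hia hi
    exact (ciInf_le ⟨_, forall_mem_range.2 hi⟩ a).trans_lt hia

section RadialIntegrals

variable {E : Type*} [NormedAddCommGroup E]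

lemma ball_zero_eq_preimage_norm (ρ : ℝ) : ball (0 : E) ρ = norm ⁻¹' Iio ρ := by
  ext z
  simp

lemma compl_ball_zero_eq_preimage_norm (ρ : ℝ) : (ball (0 : E) ρ)ᶜ = norm ⁻¹' Ici ρ := by
  ext z
  simp

variable [NormedSpace ℝ E] [FiniteDimensional ℝ E] [Nontrivial E]

lemma pow_finrank_sub_one_mul_pow_div_rpow {t : ℝ} (ht : 0 < t) (k : ℕ) (q : ℝ) :
    t ^ (finrank ℝ E - 1) * (t ^ k / t ^ (finrank ℝ E + q)) = t ^ (k - q - 1) := by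
  rw [← Real.rpow_natCast, ← Real.rpow_natCast, ← Real.rpow_sub ht, ← Real.rpow_add ht,
    Nat.cast_pred finrank_pos]
  congr 1
  ring

variable [MeasurableSpace E] [BorelSpace E] (μ : Measure E) [μ.IsAddHaarMeasure]

lemma integrableOn_norm_preimage_iff {S : Set ℝ} (hS : MeasurableSet S) (f : ℝ → ℝ) :
    IntegrableOn (fun z : E => f ‖z‖) (norm ⁻¹' S) μ ↔
      IntegrableOn (fun t => t ^ (finrank ℝ E - 1) * f t) (S ∩ Ioi 0) := by
  have hindicator : (norm ⁻¹' S).indicator (fun z : E => f ‖z‖) = fun z => S.indicator f ‖z‖ := rfl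
  have hweight : (fun t => t ^ (finrank ℝ E - 1) • S.indicator f t) =
      S.indicator fun t => t ^ (finrank ℝ E - 1) * f t := by
    ext t
    rw [indicator_mul_right, smul_eq_mul]
  rw [← integrable_indicator_iff (measurable_norm hS), hindicator, integrable_fun_norm_addHaar,
    hweight, IntegrableOn, integrable_indicator_iff hS, IntegrableOn, Measure.restrict_restrict hS,
    IntegrableOn]

lemma setIntegral_norm_preimage {S : Set ℝ} (hS : MeasurableSet S) (f : ℝ → ℝ) :
    ∫ z in norm ⁻¹' S, f ‖z‖ ∂μ =
      μ.toSphere.real univ * ∫ t in S ∩ Ioi 0, t ^ (finrank ℝ E - 1) * f t := by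
  have hindicator : (norm ⁻¹' S).indicator (fun z : E => f ‖z‖) = fun z => S.indicator f ‖z‖ := rfl
  rw [← integral_indicator (measurable_norm hS), hindicator, integral_fun_norm_addHaar,
    inter_comm, ← setIntegral_indicator hS, nsmul_eq_mul, smul_eq_mul, ← mul_assoc,
    ← Measure.toSphere_real_apply_univ]
  simp only [smul_eq_mul, indicator_mul_right]

variable {k : ℕ} {q ρ : ℝ}

lemma integrableOn_ball_norm_pow_div_rpow (hq : q < k) (hρ : 0 < ρ) :
    IntegrableOn (fun z : E => ‖z‖ ^ k / ‖z‖ ^ (finrank ℝ E + q)) (ball 0 ρ) μ := by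
  rw [ball_zero_eq_preimage_norm,
    integrableOn_norm_preimage_iff μ measurableSet_Iio (fun t => t ^ k / t ^ (finrank ℝ E + q)),
    Iio_inter_Ioi, integrableOn_congr_fun
      (fun t ht => pow_finrank_sub_one_mul_pow_div_rpow ht.1 k q) measurableSet_Ioo,
    intervalIntegral.integrableOn_Ioo_rpow_iff hρ]
  linarith

lemma setIntegral_ball_norm_pow_div_rpow (hq : q < k) (hρ : 0 < ρ) :
    ∫ z in ball (0 : E) ρ, ‖z‖ ^ k / ‖z‖ ^ (finrank ℝ E + q) ∂μ =
      μ.toSphere.real univ * (ρ ^ (k - q) / (k - q)) := by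
  rw [ball_zero_eq_preimage_norm,
    setIntegral_norm_preimage μ measurableSet_Iio (fun t => t ^ k / t ^ (finrank ℝ E + q)),
    Iio_inter_Ioi, setIntegral_congr_fun measurableSet_Ioo
      (fun t ht => pow_finrank_sub_one_mul_pow_div_rpow ht.1 k q),
    ← integral_Ioc_eq_integral_Ioo, ← intervalIntegral.integral_of_le hρ.le,
    integral_rpow (Or.inl (by linarith)), sub_add_cancel, Real.zero_rpow (by linarith), sub_zero]

lemma integrableOn_compl_ball_norm_pow_div_rpow (hq : k < q) (hρ : 0 < ρ) :
    IntegrableOn (fun z : E => ‖z‖ ^ k / ‖z‖ ^ (finrank ℝ E + q)) (ball 0 ρ)ᶜ μ := by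
  rw [compl_ball_zero_eq_preimage_norm,
    integrableOn_norm_preimage_iff μ measurableSet_Ici (fun t => t ^ k / t ^ (finrank ℝ E + q)),
    inter_eq_left.2 (Ici_subset_Ioi.2 hρ), integrableOn_congr_fun
      (fun t (ht : t ∈ Ici ρ) => pow_finrank_sub_one_mul_pow_div_rpow (hρ.trans_le ht) k q)
      measurableSet_Ici,
    integrableOn_Ici_iff_integrableOn_Ioi]
  exact integrableOn_Ioi_rpow_of_lt (by linarith) hρ

lemma setIntegral_compl_ball_norm_pow_div_rpow (hq : k < q) (hρ : 0 < ρ) :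
    ∫ z in (ball (0 : E) ρ)ᶜ, ‖z‖ ^ k / ‖z‖ ^ (finrank ℝ E + q) ∂μ =
      μ.toSphere.real univ * (ρ ^ (k - q) / (q - k)) := by
  rw [compl_ball_zero_eq_preimage_norm,
    setIntegral_norm_preimage μ measurableSet_Ici (fun t => t ^ k / t ^ (finrank ℝ E + q)),
    inter_eq_left.2 (Ici_subset_Ioi.2 hρ), setIntegral_congr_fun measurableSet_Ici
      (fun t (ht : t ∈ Ici ρ) => pow_finrank_sub_one_mul_pow_div_rpow (hρ.trans_le ht) k q),
    integral_Ici_eq_integral_Ioi, integral_Ioi_rpow_of_lt (by linarith) hρ, sub_add_cancel,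
    neg_div, ← div_neg, neg_sub]

end RadialIntegrals

section RadialMoments

variable {E : Type*} [NormedAddCommGroup E] [InnerProductSpace ℝ E] [FiniteDimensional ℝ E]
  [MeasurableSpace E] [BorelSpace E] {w : ℝ → ℝ}

lemma integrable_inner_mul_inner_radial (hw : Measurable w)
    (hint : Integrable fun z : E => ‖z‖ ^ 2 * w ‖z‖) (a b : E) :
    Integrable fun z : E => ⟪a, z⟫ * ⟪b, z⟫ * w ‖z‖ := by
  refine (hint.const_mul (‖a‖ * ‖b‖)).mono (by fun_prop) (.of_forall fun z => ?_)
  calc ‖⟪a, z⟫ * ⟪b, z⟫ * w ‖z‖‖ ≤ (‖a‖ * ‖z‖) * (‖b‖ * ‖z‖) * ‖w ‖z‖‖ := by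
        rw [norm_mul, norm_mul]
        gcongr <;> exact norm_inner_le_norm _ _
    _ = ‖‖a‖ * ‖b‖ * (‖z‖ ^ 2 * w ‖z‖)‖ := by
        simp only [norm_mul, norm_pow, norm_norm]
        ring

-- A reflection exchanges `a` and `b` and preserves the weight.
lemma integral_inner_sq_radial_congr (w : ℝ → ℝ) {a b : E} (hab : ‖a‖ = ‖b‖) :
    ∫ z : E, ⟪a, z⟫ ^ 2 * w ‖z‖ = ∫ z : E, ⟪b, z⟫ ^ 2 * w ‖z‖ := by
  set R := (ℝ ∙ (a - b))ᗮ.reflection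
  have hR : ∀ z, ⟪b, R z⟫ = ⟪a, z⟫ := fun z => by
    rw [← Submodule.reflection_sub hab, R.inner_map_map]
  rw [← R.measurePreserving.integral_comp R.toHomeomorph.measurableEmbedding
    (fun z => ⟪b, z⟫ ^ 2 * w ‖z‖)]
  simp only [hR, R.norm_map]

variable [Nontrivial E]

lemma integral_inner_sq_radial (hw : Measurable w)
    (hint : Integrable fun z : E => ‖z‖ ^ 2 * w ‖z‖) (a : E) :
    ∫ z : E, ⟪a, z⟫ ^ 2 * w ‖z‖ = ‖a‖ ^ 2 / finrank ℝ E * ∫ z : E, ‖z‖ ^ 2 * w ‖z‖ := by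
  have hdim : (finrank ℝ E : ℝ) ≠ 0 := Nat.cast_ne_zero.2 finrank_pos.ne'
  let e := stdOrthonormalBasis ℝ E
  have hcoord : ∀ i, ∫ z : E, ⟪‖a‖ • e i, z⟫ ^ 2 * w ‖z‖ = ∫ z : E, ⟪a, z⟫ ^ 2 * w ‖z‖ :=
    fun i => integral_inner_sq_radial_congr w (by simp [norm_smul])
  have hsum : ∀ z : E, ∑ i, ⟪‖a‖ • e i, z⟫ ^ 2 * w ‖z‖ = ‖a‖ ^ 2 * (‖z‖ ^ 2 * w ‖z‖) := fun z => by
    simp only [real_inner_smul_left, mul_pow, ← Finset.sum_mul, ← Finset.mul_sum,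
      e.sum_sq_inner_right, mul_assoc]
  have htotal : finrank ℝ E * ∫ z : E, ⟪a, z⟫ ^ 2 * w ‖z‖ =
      ‖a‖ ^ 2 * ∫ z : E, ‖z‖ ^ 2 * w ‖z‖ := by
    simp only [← integral_const_mul (‖a‖ ^ 2), ← hsum]
    rw [integral_finsetSum _ fun i _ => ?_]
    · simp [hcoord]
    · simpa only [sq] using integrable_inner_mul_inner_radial hw hint (‖a‖ • e i) (‖a‖ • e i)
  field_simp
  linarith

lemma integral_inner_mul_inner_radial (hw : Measurable w)
    (hint : Integrable fun z : E => ‖z‖ ^ 2 * w ‖z‖) (a b : E) :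
    ∫ z : E, ⟪a, z⟫ * ⟪b, z⟫ * w ‖z‖ = ⟪a, b⟫ / finrank ℝ E * ∫ z : E, ‖z‖ ^ 2 * w ‖z‖ := by
  have hsq : ∀ c : E, Integrable fun z : E => ⟪c, z⟫ ^ 2 * w ‖z‖ := fun c => by
    simpa only [sq] using integrable_inner_mul_inner_radial hw hint c c
  have hpol : ∀ z : E, ⟪a, z⟫ * ⟪b, z⟫ * w ‖z‖ =
      (⟪a + b, z⟫ ^ 2 * w ‖z‖ - ⟪a - b, z⟫ ^ 2 * w ‖z‖) / 4 := fun z => by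
    rw [inner_add_left, inner_sub_left]
    ring
  simp only [hpol]
  rw [integral_div, integral_sub (hsq _) (hsq _), integral_inner_sq_radial hw hint,
    integral_inner_sq_radial hw hint, norm_add_sq_real, norm_sub_sq_real]
  ring

lemma integral_inner_map_radial (hw : Measurable w)
    (hint : Integrable fun z : E => ‖z‖ ^ 2 * w ‖z‖) (S : E →L[ℝ] E) :
    ∫ z : E, ⟪z, S z⟫ * w ‖z‖ =
      LinearMap.trace ℝ E S / finrank ℝ E * ∫ z : E, ‖z‖ ^ 2 * w ‖z‖ := by
  let e := stdOrthonormalBasis ℝ E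
  have hexpand : ∀ z : E, ⟪z, S z⟫ * w ‖z‖ = ∑ i, ⟪e i, z⟫ * ⟪S.adjoint (e i), z⟫ * w ‖z‖ :=
    fun z => by
      rw [← e.sum_inner_mul_inner z (S z), Finset.sum_mul]
      simp only [ContinuousLinearMap.adjoint_inner_left, real_inner_comm]
  simp only [hexpand]
  rw [integral_finsetSum _ fun i _ => integrable_inner_mul_inner_radial hw hint _ _,
    LinearMap.trace_eq_sum_inner (S : E →ₗ[ℝ] E) e, Finset.sum_div, Finset.sum_mul]
  simp only [integral_inner_mul_inner_radial hw hint, ContinuousLinearMap.adjoint_inner_right,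
    ContinuousLinearMap.coe_coe]
  simp only [real_inner_comm]

end RadialMoments

section Domination

variable {E : Type*} [NormedAddCommGroup E] {h : E → ℝ} {C q : ℝ} {k : ℕ}

lemma norm_div_norm_rpow_le {z : E} (hz : |h z| ≤ C * ‖z‖ ^ k) :
    ‖h z / ‖z‖ ^ q‖ ≤ C * (‖z‖ ^ k / ‖z‖ ^ q) := by
  rw [norm_div, Real.norm_eq_abs, Real.norm_of_nonneg (by positivity : 0 ≤ ‖z‖ ^ q),
    ← mul_div_assoc]
  gcongr

variable [MeasurableSpace E] {μ : Measure E} {t : Set E}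

lemma abs_setIntegral_div_norm_rpow_le (ht : MeasurableSet t)
    (hint : IntegrableOn (fun z : E => ‖z‖ ^ k / ‖z‖ ^ q) t μ)
    (hle : ∀ z ∈ t, |h z| ≤ C * ‖z‖ ^ k) :
    |∫ z in t, h z / ‖z‖ ^ q ∂μ| ≤ C * ∫ z in t, ‖z‖ ^ k / ‖z‖ ^ q ∂μ := by
  rw [← integral_const_mul]
  exact norm_integral_le_of_norm_le (hint.const_mul C)
    (ae_restrict_of_forall_mem ht fun z hz => norm_div_norm_rpow_le (hle z hz))

lemma integrableOn_div_norm_rpow_of_abs_le [OpensMeasurableSpace E] (ht : MeasurableSet t)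
    (hh : Measurable h) (hint : IntegrableOn (fun z : E => ‖z‖ ^ k / ‖z‖ ^ q) t μ)
    (hle : ∀ z ∈ t, |h z| ≤ C * ‖z‖ ^ k) :
    IntegrableOn (fun z => h z / ‖z‖ ^ q) t μ :=
  (hint.const_mul C).mono' (hh.div (measurable_norm.pow_const q)).aestronglyMeasurable
    (ae_restrict_of_forall_mem ht fun z hz => norm_div_norm_rpow_le (hle z hz))

end Domination

section InnerMap

variable {E : Type*} [NormedAddCommGroup E] [InnerProductSpace ℝ E]

lemma abs_inner_map_le (S : E →L[ℝ] E) (z : E) : |⟪z, S z⟫| ≤ ‖S‖ * ‖z‖ ^ 2 :=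
  calc |⟪z, S z⟫| ≤ ‖z‖ * ‖S z‖ := abs_real_inner_le_norm _ _
    _ ≤ ‖z‖ * (‖S‖ * ‖z‖) := by gcongr; exact S.le_opNorm z
    _ = ‖S‖ * ‖z‖ ^ 2 := by ring

lemma isBigO_inner_map (S : E →L[ℝ] E) (l : Filter E) :
    (fun z => ⟪z, S z⟫) =O[l] fun z => ‖z‖ ^ 2 :=
  .of_bound ‖S‖ (.of_forall fun z => by simpa using abs_inner_map_le S z)

lemma isBigO_norm_sq_of_sub_inner_map {h : E → ℝ} {S : E →L[ℝ] E} {l : Filter E}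
    (hzero : (fun z => h z - ⟪z, S z⟫) =o[l] fun z => ‖z‖ ^ 2) : h =O[l] fun z => ‖z‖ ^ 2 := by
  simpa only [sub_add_cancel] using hzero.isBigO.add (isBigO_inner_map S l)

lemma abs_indicator_ball_one_inner_map_le (S : E →L[ℝ] E) (z : E) :
    |(ball 0 1).indicator (fun z => ⟪z, S z⟫) z| ≤ ‖S‖ * ‖z‖ := by
  by_cases hz : z ∈ ball (0 : E) 1
  · rw [indicator_of_mem hz]
    refine (abs_inner_map_le S z).trans ?_
    gcongr
    exact pow_le_of_le_one (norm_nonneg z) (mem_ball_zero_iff.1 hz).le two_ne_zero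
  · rw [indicator_of_notMem hz, abs_zero]
    positivity

end InnerMap

lemma tendsto_one_sub_mul_rpow_div_add {ρ : ℝ} (hρ : 0 < ρ) (a b : ℝ) :
    Tendsto (fun s : ℝ =>
        (1 - s) * (a * (ρ ^ (2 - 2 * s) / (2 - 2 * s)) + b * (ρ ^ (1 - 2 * s) / (2 * s - 1))))
      (𝓝[<] 1) (𝓝 (a / 2)) := by
  have hpow : ∀ c : ℝ, Continuous fun s : ℝ => ρ ^ (c - 2 * s) := fun c =>
    continuous_const.rpow (by fun_prop) fun _ => Or.inl hρ.ne'
  have hcont : ContinuousAt (fun s : ℝ => a / 2 * ρ ^ (2 - 2 * s) +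
      (1 - s) * (b * (ρ ^ (1 - 2 * s) / (2 * s - 1)))) 1 := by
    have htail : ContinuousAt (fun s : ℝ => ρ ^ (1 - 2 * s) / (2 * s - 1)) 1 :=
      (hpow 1).continuousAt.div (by fun_prop) (by norm_num)
    exact ((hpow 2).continuousAt.const_mul _).add
      ((continuousAt_const.sub continuousAt_id).mul (htail.const_mul b))
  have hlim := hcont.tendsto.mono_left (nhdsWithin_le_nhds (s := Iio 1))
  norm_num at hlim
  refine hlim.congr' ?_
  filter_upwards [self_mem_nhdsWithin] with s (hs : s < 1)
  have : 1 - s ≠ 0 := by linarith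
  rw [show 2 - 2 * s = 2 * (1 - s) by ring]
  field_simp

section HypersingularIntegral

variable {E : Type*} [NormedAddCommGroup E] [InnerProductSpace ℝ E] [FiniteDimensional ℝ E]
  [MeasurableSpace E] [BorelSpace E]

/-- The integral of `h` against the kernel `‖z‖ ^ (-(d + 2s))`, `d = dim E`, of the fractional
Laplacian of order `s`. It converges when `h` vanishes to second order at the origin and grows at
most linearly; where it diverges, it is `0` as a Bochner integral. -/
noncomputable def hypersingularIntegral (s : ℝ) (h : E → ℝ) : ℝ :=
  ∫ z, h z / ‖z‖ ^ (finrank ℝ E + 2 * s)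

lemma hypersingularIntegral_nonneg {h : E → ℝ} (hh : ∀ z, 0 ≤ h z) (s : ℝ) :
    0 ≤ hypersingularIntegral s h :=
  integral_nonneg fun z => div_nonneg (hh z) (by positivity)

variable [Nontrivial E] {s ρ M : ℝ} {h : E → ℝ}

lemma integrable_div_norm_rpow_of_abs_le {C : ℝ} (hs : 1 / 2 < s) (hs₁ : s < 1) (hρ : 0 < ρ)
    (hh : Measurable h) (hball : ∀ z ∈ ball (0 : E) ρ, |h z| ≤ C * ‖z‖ ^ 2)
    (hgrowth : ∀ z, |h z| ≤ M * ‖z‖) :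
    Integrable fun z : E => h z / ‖z‖ ^ (finrank ℝ E + 2 * s) := by
  rw [← integrableOn_univ, ← union_compl_self (ball (0 : E) ρ)]
  refine IntegrableOn.union ?_ ?_
  · exact integrableOn_div_norm_rpow_of_abs_le measurableSet_ball hh
      (integrableOn_ball_norm_pow_div_rpow volume (by push_cast; linarith) hρ) hball
  · exact integrableOn_div_norm_rpow_of_abs_le (k := 1) measurableSet_ball.compl hh
      (integrableOn_compl_ball_norm_pow_div_rpow volume (by push_cast; linarith) hρ)
      fun z _ => by simpa using hgrowth z

lemma abs_hypersingularIntegral_le {C : ℝ} (hs : 1 / 2 < s) (hs₁ : s < 1) (hρ : 0 < ρ)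
    (hh : Measurable h) (hball : ∀ z ∈ ball (0 : E) ρ, |h z| ≤ C * ‖z‖ ^ 2)
    (hgrowth : ∀ z, |h z| ≤ M * ‖z‖) :
    |hypersingularIntegral s h| ≤ (volume : Measure E).toSphere.real univ *
      (C * (ρ ^ (2 - 2 * s) / (2 - 2 * s)) + M * (ρ ^ (1 - 2 * s) / (2 * s - 1))) := by
  have hinner := abs_setIntegral_div_norm_rpow_le measurableSet_ball
    (integrableOn_ball_norm_pow_div_rpow volume (q := 2 * s) (by push_cast; linarith) hρ) hball
  have houter := abs_setIntegral_div_norm_rpow_le (k := 1) measurableSet_ball.compl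
    (integrableOn_compl_ball_norm_pow_div_rpow volume (q := 2 * s) (by push_cast; linarith) hρ)
    fun z _ => by simpa using hgrowth z
  rw [setIntegral_ball_norm_pow_div_rpow volume (by push_cast; linarith) hρ] at hinner
  rw [setIntegral_compl_ball_norm_pow_div_rpow volume (by push_cast; linarith) hρ] at houter
  rw [hypersingularIntegral, ← integral_add_compl measurableSet_ball
    (integrable_div_norm_rpow_of_abs_le hs hs₁ hρ hh hball hgrowth)]
  refine (abs_add_le _ _).trans ((add_le_add hinner houter).trans_eq ?_)
  push_cast
  ring

lemma integrable_div_norm_rpow_of_isBigO (hs : 1 / 2 < s) (hs₁ : s < 1) (hh : Measurable h)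
    (hzero : h =O[𝓝 0] fun z => ‖z‖ ^ 2) (hgrowth : ∀ z, |h z| ≤ M * ‖z‖) :
    Integrable fun z : E => h z / ‖z‖ ^ (finrank ℝ E + 2 * s) := by
  obtain ⟨C, hC⟩ := hzero.bound
  obtain ⟨ρ, hρ, hball⟩ := Metric.eventually_nhds_iff_ball.1 hC
  simp only [norm_pow, norm_norm] at hball
  exact integrable_div_norm_rpow_of_abs_le hs hs₁ hρ hh hball hgrowth

lemma tendsto_mul_hypersingularIntegral_zero (hh : Measurable h)
    (hzero : h =o[𝓝 0] fun z => ‖z‖ ^ 2) (hgrowth : ∀ z, |h z| ≤ M * ‖z‖) :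
    Tendsto (fun s => (1 - s) * hypersingularIntegral s h) (𝓝[<] 1) (𝓝 0) := by
  refine Metric.tendsto_nhds.2 fun η hη => ?_
  obtain ⟨ε, hε, hεη⟩ := exists_pos_mul_lt hη ((volume : Measure E).toSphere.real univ / 2)
  obtain ⟨ρ, hρ, hball⟩ := Metric.eventually_nhds_iff_ball.1 (hzero.def hε)
  simp only [norm_pow, norm_norm] at hball
  have hmajorant := (tendsto_one_sub_mul_rpow_div_add hρ ε M).const_mul
    ((volume : Measure E).toSphere.real univ)
  rw [← mul_comm_div] at hmajorant
  filter_upwards [hmajorant.eventually_lt_const hεη,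
    Ioo_mem_nhdsLT (by norm_num : (1 / 2 : ℝ) < 1)] with s hlt ⟨hs, hs₁⟩
  rw [dist_zero_right, norm_mul, Real.norm_of_nonneg (by linarith : 0 ≤ 1 - s)]
  refine lt_of_le_of_lt (mul_le_mul_of_nonneg_left
    (abs_hypersingularIntegral_le hs hs₁ hρ hh hball hgrowth) (by linarith)) ?_
  rwa [mul_left_comm]

lemma integrableOn_ball_inner_map_div_rpow (hs₁ : s < 1) (hρ : 0 < ρ) (S : E →L[ℝ] E) :
    IntegrableOn (fun z => ⟪z, S z⟫ / ‖z‖ ^ (finrank ℝ E + 2 * s)) (ball 0 ρ) :=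
  integrableOn_div_norm_rpow_of_abs_le measurableSet_ball (by fun_prop)
    (integrableOn_ball_norm_pow_div_rpow volume (by push_cast; linarith) hρ)
    fun z _ => abs_inner_map_le S z

lemma setIntegral_ball_inner_map_div_rpow (hs₁ : s < 1) (hρ : 0 < ρ) (S : E →L[ℝ] E) :
    ∫ z in ball 0 ρ, ⟪z, S z⟫ / ‖z‖ ^ (finrank ℝ E + 2 * s) =
      LinearMap.trace ℝ E S / finrank ℝ E *
        ((volume : Measure E).toSphere.real univ * (ρ ^ (2 - 2 * s) / (2 - 2 * s))) := by
  set w : ℝ → ℝ := (Iio ρ).indicator fun t => (t ^ (finrank ℝ E + 2 * s))⁻¹ with hw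
  have hball : ∀ f : E → ℝ, (fun z => f z * w ‖z‖) =
      (ball 0 ρ).indicator fun z => f z / ‖z‖ ^ (finrank ℝ E + 2 * s) := fun f => by
    ext z
    by_cases hz : ‖z‖ < ρ <;> simp [hw, hz, div_eq_mul_inv]
  have hmeas : Measurable w := Measurable.indicator (by fun_prop) measurableSet_Iio
  have hk : 2 * s < (2 : ℕ) := by push_cast; linarith
  have hint : Integrable fun z : E => ‖z‖ ^ 2 * w ‖z‖ := by
    rw [hball, integrable_indicator_iff measurableSet_ball]
    exact integrableOn_ball_norm_pow_div_rpow volume hk hρ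
  have hmoment := integral_inner_map_radial hmeas hint S
  rwa [hball, hball, integral_indicator measurableSet_ball, integral_indicator measurableSet_ball,
    setIntegral_ball_norm_pow_div_rpow volume hk hρ] at hmoment

lemma mul_hypersingularIntegral_indicator_ball_one (hs₁ : s < 1) (S : E →L[ℝ] E) :
    (1 - s) * hypersingularIntegral s ((ball 0 1).indicator fun z => ⟪z, S z⟫) =
      (volume : Measure E).toSphere.real univ / (2 * finrank ℝ E) * LinearMap.trace ℝ E S := by
  have hindicator : (fun z => (ball 0 1).indicator (fun z => ⟪z, S z⟫) z /
      ‖z‖ ^ (finrank ℝ E + 2 * s)) =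
      (ball 0 1).indicator fun z => ⟪z, S z⟫ / ‖z‖ ^ (finrank ℝ E + 2 * s) := by
    ext z
    simp only [div_eq_mul_inv, indicator_mul_left]
  rw [hypersingularIntegral, hindicator, integral_indicator measurableSet_ball,
    setIntegral_ball_inner_map_div_rpow hs₁ one_pos, Real.one_rpow]
  have : 1 - s ≠ 0 := by linarith
  field_simp

theorem tendsto_mul_hypersingularIntegral (hh : Measurable h) (S : E →L[ℝ] E)
    (hzero : (fun z => h z - ⟪z, S z⟫) =o[𝓝 0] fun z => ‖z‖ ^ 2)
    (hgrowth : ∀ z, |h z| ≤ M * ‖z‖) :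
    Tendsto (fun s => (1 - s) * hypersingularIntegral s h) (𝓝[<] 1)
      (𝓝 ((volume : Measure E).toSphere.real univ / (2 * finrank ℝ E) *
        LinearMap.trace ℝ E S)) := by
  set Q : E → ℝ := (ball 0 1).indicator fun z => ⟪z, S z⟫
  have hQmeas : Measurable Q := Measurable.indicator (by fun_prop) measurableSet_ball
  have hQgrowth : ∀ z, |Q z| ≤ ‖S‖ * ‖z‖ := abs_indicator_ball_one_inner_map_le S
  have hQeq : (fun z => ⟪z, S z⟫) =ᶠ[𝓝 0] Q :=
    Filter.eventuallyEq_of_mem (ball_mem_nhds 0 one_pos) fun z hz =>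
      (indicator_of_mem hz fun z => ⟪z, S z⟫).symm
  have hdiff : (fun z => h z - Q z) =o[𝓝 0] fun z => ‖z‖ ^ 2 :=
    hzero.congr' (EventuallyEq.rfl.sub hQeq) .rfl
  have hdiff_growth : ∀ z, |h z - Q z| ≤ (M + ‖S‖) * ‖z‖ := fun z => by
    rw [add_mul]
    exact (abs_sub _ _).trans (add_le_add (hgrowth z) (hQgrowth z))
  have hsum := (tendsto_mul_hypersingularIntegral_zero (hh.sub hQmeas) hdiff hdiff_growth).add_const
    ((volume : Measure E).toSphere.real univ / (2 * finrank ℝ E) * LinearMap.trace ℝ E S)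
  rw [zero_add] at hsum
  refine hsum.congr' ?_
  filter_upwards [Ioo_mem_nhdsLT (by norm_num : (1 / 2 : ℝ) < 1)] with s ⟨hs, hs₁⟩
  have hdiff_int := integrable_div_norm_rpow_of_isBigO hs hs₁ (hh.sub hQmeas) hdiff.isBigO
    hdiff_growth
  have hQint := integrable_div_norm_rpow_of_isBigO hs hs₁ hQmeas
    ((isBigO_inner_map S (𝓝 0)).congr' hQeq .rfl) hQgrowth
  rw [← mul_hypersingularIntegral_indicator_ball_one hs₁ S, ← mul_add, hypersingularIntegral,
    hypersingularIntegral, hypersingularIntegral, ← integral_add hdiff_int hQint]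
  simp only [Pi.sub_apply, ← add_div, sub_add_cancel, Q]

lemma le_hypersingularIntegral_comp {g : E → ℝ} {H T : E →L[ℝ] E} {r : ℝ}
    (hs₁ : s < 1) (hr : 0 < r) (hT : T ≠ 0) (hg : ∀ y, 0 ≤ g y)
    (hle : ∀ y ∈ ball 0 r, ⟪y, H y⟫ ≤ g y)
    (hint : Integrable fun z : E => g (T z) / ‖z‖ ^ (finrank ℝ E + 2 * s)) :
    LinearMap.trace ℝ E (T.adjoint ∘L H ∘L T) / finrank ℝ E *
        ((volume : Measure E).toSphere.real univ * ((r / ‖T‖) ^ (2 - 2 * s) / (2 - 2 * s))) ≤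
      hypersingularIntegral s (g ∘ T) := by
  have hscale : ∀ z ∈ ball (0 : E) (r / ‖T‖), T z ∈ ball (0 : E) r := fun z hz => by
    rw [mem_ball_zero_iff] at hz ⊢
    calc ‖T z‖ ≤ ‖T‖ * ‖z‖ := T.le_opNorm z
      _ < r := by rwa [lt_div_iff₀' (norm_pos_iff.2 hT)] at hz
  rw [← setIntegral_ball_inner_map_div_rpow hs₁ (div_pos hr (norm_pos_iff.2 hT))]
  calc ∫ z in ball 0 (r / ‖T‖), ⟪z, (T.adjoint ∘L H ∘L T) z⟫ / ‖z‖ ^ (finrank ℝ E + 2 * s)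
      ≤ ∫ z in ball 0 (r / ‖T‖), g (T z) / ‖z‖ ^ (finrank ℝ E + 2 * s) := by
        refine setIntegral_mono_on ?_ hint.integrableOn measurableSet_ball fun z hz => ?_
        · exact integrableOn_ball_inner_map_div_rpow hs₁ (div_pos hr (norm_pos_iff.2 hT)) _
        · gcongr
          simpa only [ContinuousLinearMap.comp_apply, ContinuousLinearMap.adjoint_inner_right]
            using hle _ (hscale z hz)
    _ ≤ hypersingularIntegral s (g ∘ T) :=
        setIntegral_le_integral hint (.of_forall fun z => div_nonneg (hg _) (by positivity))

end HypersingularIntegral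

section InnerMapTrace

variable {E : Type*} [NormedAddCommGroup E] [InnerProductSpace ℝ E]

lemma opNorm_sq_le_sum_norm_sq {F ι : Type*} [NormedAddCommGroup F] [NormedSpace ℝ F] [Fintype ι]
    (e : OrthonormalBasis ι ℝ E) (T : E →L[ℝ] F) : ‖T‖ ^ 2 ≤ ∑ i, ‖T (e i)‖ ^ 2 := by
  rw [← Real.le_sqrt (norm_nonneg T) (by positivity)]
  refine T.opNorm_le_bound (Real.sqrt_nonneg _) fun z => ?_
  calc ‖T z‖ = ‖∑ i, ⟪e i, z⟫ • T (e i)‖ := by simp only [← map_smul, ← map_sum, e.sum_repr']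
    _ ≤ ∑ i, ‖T (e i)‖ * ‖⟪e i, z⟫‖ :=
        (norm_sum_le _ _).trans_eq (by simp only [norm_smul, mul_comm])
    _ ≤ √(∑ i, ‖T (e i)‖ ^ 2) * √(∑ i, ‖⟪e i, z⟫‖ ^ 2) := Real.sum_mul_le_sqrt_mul_sqrt _ _ _
    _ = √(∑ i, ‖T (e i)‖ ^ 2) * ‖z‖ := by
        rw [e.sum_sq_norm_inner_right, Real.sqrt_sq (norm_nonneg z)]

lemma inner_map_nonneg_of_isLittleO {g : E → ℝ} {H : E →L[ℝ] E} (hg : ∀ y, 0 ≤ g y)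
    (hzero : (fun y => g y - ⟪y, H y⟫) =o[𝓝 0] fun y => ‖y‖ ^ 2) (v : E) : 0 ≤ ⟪v, H v⟫ := by
  have hline : Tendsto (fun t : ℝ => t • v) (𝓝[≠] 0) (𝓝 0) :=
    ((continuous_id.smul continuous_const).tendsto' 0 0 (zero_smul ℝ v)).mono_left
      nhdsWithin_le_nhds
  have herror : (fun t : ℝ => g (t • v) - t ^ 2 * ⟪v, H v⟫) =o[𝓝[≠] 0] fun t => t ^ 2 := by
    refine ((hzero.comp_tendsto hline).congr_left fun t => ?_).trans_isBigO ?_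
    · simp only [Function.comp_apply, map_smul, real_inner_smul_left, real_inner_smul_right]
      ring
    · exact .of_bound (‖v‖ ^ 2) (.of_forall fun t => by simp [norm_smul, mul_pow, mul_comm])
  have hquot : Tendsto (fun t : ℝ => g (t • v) / t ^ 2) (𝓝[≠] 0) (𝓝 ⟪v, H v⟫) := by
    have hsum := herror.tendsto_div_nhds_zero.add_const ⟪v, H v⟫
    rw [zero_add] at hsum
    refine hsum.congr' ?_
    filter_upwards [self_mem_nhdsWithin] with t (ht : t ≠ 0)
    field_simp
    ring
  exact ge_of_tendsto' hquot fun t => div_nonneg (hg _) (sq_nonneg t)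

variable [FiniteDimensional ℝ E]

lemma exists_inner_map_eq_zero_or_coercive [Nontrivial E] {H : E →L[ℝ] E}
    (hH : ∀ v, 0 ≤ ⟪v, H v⟫) :
    (∃ v, ‖v‖ = 1 ∧ ⟪v, H v⟫ = 0) ∨ ∃ l > 0, ∀ v, l * ‖v‖ ^ 2 ≤ ⟪v, H v⟫ := by
  obtain ⟨v, hv, hmin⟩ := (isCompact_sphere (0 : E) 1).exists_isMinOn
    (NormedSpace.sphere_nonempty.2 zero_le_one) (f := fun v => ⟪v, H v⟫) (by fun_prop)
  rcases (hH v).eq_or_lt with hzero | hpos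
  · exact .inl ⟨v, mem_sphere_zero_iff_norm.1 hv, hzero.symm⟩
  refine .inr ⟨⟪v, H v⟫, hpos, fun w => ?_⟩
  rcases eq_or_ne w 0 with rfl | hw
  · simp
  have hw' : ‖w‖ ≠ 0 := norm_ne_zero_iff.2 hw
  calc ⟪v, H v⟫ * ‖w‖ ^ 2 ≤ ⟪‖w‖⁻¹ • w, H (‖w‖⁻¹ • w)⟫ * ‖w‖ ^ 2 := by
        gcongr
        exact hmin (by simp [norm_smul, hw'])
    _ = ⟪w, H w⟫ := by
        simp only [map_smul, real_inner_smul_left, real_inner_smul_right]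
        field_simp

variable {H : E →L[ℝ] E}

lemma trace_adjoint_comp_comp {ι : Type*} [Fintype ι] (e : OrthonormalBasis ι ℝ E)
    (H T : E →L[ℝ] E) :
    LinearMap.trace ℝ E (T.adjoint ∘L H ∘L T) = ∑ i, ⟪T (e i), H (T (e i))⟫ := by
  simp only [LinearMap.trace_eq_sum_inner _ e, ContinuousLinearMap.coe_coe,
    ContinuousLinearMap.comp_apply, ContinuousLinearMap.adjoint_inner_right]

lemma trace_adjoint_comp_comp_nonneg (hH : ∀ v, 0 ≤ ⟪v, H v⟫) (T : E →L[ℝ] E) :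
    0 ≤ LinearMap.trace ℝ E (T.adjoint ∘L H ∘L T) := by
  rw [trace_adjoint_comp_comp (stdOrthonormalBasis ℝ E)]
  exact Finset.sum_nonneg fun i _ => hH _

lemma mul_opNorm_sq_le_trace_adjoint_comp_comp {l : ℝ} (hl : 0 ≤ l)
    (hH : ∀ v, l * ‖v‖ ^ 2 ≤ ⟪v, H v⟫) (T : E →L[ℝ] E) :
    l * ‖T‖ ^ 2 ≤ LinearMap.trace ℝ E (T.adjoint ∘L H ∘L T) := by
  let e := stdOrthonormalBasis ℝ E
  calc l * ‖T‖ ^ 2 ≤ l * ∑ i, ‖T (e i)‖ ^ 2 := by gcongr; exact opNorm_sq_le_sum_norm_sq e T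
    _ = ∑ i, l * ‖T (e i)‖ ^ 2 := Finset.mul_sum _ _ _
    _ ≤ LinearMap.trace ℝ E (T.adjoint ∘L H ∘L T) := by
        rw [trace_adjoint_comp_comp e]
        exact Finset.sum_le_sum fun i _ => hH _

end InnerMapTrace

lemma rpow_mul_rpow_le_mul_div_rpow {F I a l r s : ℝ} (hI : 0 ≤ I) (hIF : I ≤ F) (ha : 0 < a)
    (hl : 0 < l) (hr : 0 < r) (hF : l * a ^ 2 ≤ F) (hs : 0 < s) (hs₁ : s < 1) :
    (r ^ 2 * l) ^ (1 - s) * I ^ s ≤ F * (r / a) ^ (2 - 2 * s) := by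
  have hFpos : 0 < F := lt_of_lt_of_le (by positivity) hF
  have hbase : r ^ 2 * l ≤ F * (r / a) ^ 2 := by
    rw [div_pow, mul_div_assoc', le_div_iff₀ (by positivity)]
    nlinarith [sq_nonneg r]
  calc (r ^ 2 * l) ^ (1 - s) * I ^ s
      ≤ (F * (r / a) ^ 2) ^ (1 - s) * F ^ s := by
        gcongr
    _ = F ^ (1 - s) * F ^ s * ((r / a) ^ (2 : ℝ)) ^ (1 - s) := by
        rw [Real.mul_rpow hFpos.le (by positivity), Real.rpow_two]
        ring
    _ = F * (r / a) ^ (2 - 2 * s) := by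
        rw [← Real.rpow_add hFpos, sub_add_cancel, Real.rpow_one,
          ← Real.rpow_mul (by positivity), mul_sub, mul_one]

section InfimumOverMaps

variable {E : Type*} [NormedAddCommGroup E] {g : E → ℝ} {M : ℝ}

lemma abs_comp_le_of_abs_le [NormedSpace ℝ E] (hgrowth : ∀ y, |g y| ≤ M * ‖y‖) (T : E →L[ℝ] E)
    (z : E) : |(g ∘ T) z| ≤ |M| * ‖T‖ * ‖z‖ :=
  calc |g (T z)| ≤ |M| * ‖T z‖ := (hgrowth _).trans (by gcongr; exact le_abs_self M)
    _ ≤ |M| * (‖T‖ * ‖z‖) := by gcongr; exact T.le_opNorm z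
    _ = |M| * ‖T‖ * ‖z‖ := (mul_assoc _ _ _).symm

variable [InnerProductSpace ℝ E] {H : E →L[ℝ] E} {l κ : ℝ}

lemma exists_ball_inner_smul_map_le (hl : 0 < l) (hH : ∀ v, l * ‖v‖ ^ 2 ≤ ⟪v, H v⟫)
    (hzero : (fun y => g y - ⟪y, H y⟫) =o[𝓝 0] fun y => ‖y‖ ^ 2) (hκ : κ < 1) :
    ∃ r > 0, ∀ y ∈ ball (0 : E) r, ⟪y, (κ • H) y⟫ ≤ g y := by
  obtain ⟨r, hr, hball⟩ := Metric.eventually_nhds_iff_ball.1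
    (hzero.def (mul_pos (sub_pos.2 hκ) hl))
  refine ⟨r, hr, fun y hy => ?_⟩
  have herror := neg_le_of_abs_le (hball y hy)
  rw [norm_pow, norm_norm] at herror
  have hcoercive := mul_le_mul_of_nonneg_left (hH y) (sub_pos.2 hκ).le
  rw [_root_.smul_apply, real_inner_smul_right]
  linarith

variable [FiniteDimensional ℝ E]

lemma isLittleO_comp_sub_inner_map (hzero : (fun y => g y - ⟪y, H y⟫) =o[𝓝 0] fun y => ‖y‖ ^ 2)
    (T : E →L[ℝ] E) :
    (fun z => (g ∘ T) z - ⟪z, (T.adjoint ∘L H ∘L T) z⟫) =o[𝓝 0] fun z => ‖z‖ ^ 2 := by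
  have hT : Tendsto T (𝓝 0) (𝓝 0) := T.continuous.tendsto' 0 0 (map_zero T)
  refine ((hzero.comp_tendsto hT).congr_left fun z => ?_).trans_isBigO ?_
  · simp only [Function.comp_apply, ContinuousLinearMap.comp_apply,
      ContinuousLinearMap.adjoint_inner_right]
  · exact (T.isBigO_id (𝓝 0)).norm_norm.pow 2

variable [Nontrivial E] [MeasurableSpace E] [BorelSpace E]

lemma tendsto_mul_hypersingularIntegral_comp (hg : Measurable g)
    (hgrowth : ∀ y, |g y| ≤ M * ‖y‖)
    (hzero : (fun y => g y - ⟪y, H y⟫) =o[𝓝 0] fun y => ‖y‖ ^ 2) (T : E →L[ℝ] E) :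
    Tendsto (fun s => (1 - s) * hypersingularIntegral s (g ∘ T)) (𝓝[<] 1)
      (𝓝 ((volume : Measure E).toSphere.real univ / (2 * finrank ℝ E) *
        LinearMap.trace ℝ E (T.adjoint ∘L H ∘L T))) :=
  tendsto_mul_hypersingularIntegral (hg.comp T.measurable) _
    (isLittleO_comp_sub_inner_map hzero T) (abs_comp_le_of_abs_le hgrowth T)

-- The scale `r / ‖T‖` at which the quadratic lower bound survives composition with `T` is
-- compensated by `l * ‖T‖ ^ 2 ≤ trace (T† H T)`, so the bound does not depend on `T`.
lemma exists_forall_le_mul_hypersingularIntegral_comp (hg : Measurable g) (hg₀ : ∀ y, 0 ≤ g y)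
    (hgrowth : ∀ y, |g y| ≤ M * ‖y‖)
    (hzero : (fun y => g y - ⟪y, H y⟫) =o[𝓝 0] fun y => ‖y‖ ^ 2)
    (hl : 0 < l) (hH : ∀ v, l * ‖v‖ ^ 2 ≤ ⟪v, H v⟫) (hκ₀ : 0 ≤ κ) (hκ : κ < 1) :
    ∃ r > 0, ∀ s ∈ Ioo (1 / 2 : ℝ) 1, ∀ I ≥ 0, ∀ T : E →L[ℝ] E, T ≠ 0 →
      I ≤ LinearMap.trace ℝ E (T.adjoint ∘L H ∘L T) →
      (volume : Measure E).toSphere.real univ / (2 * finrank ℝ E) *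
        (κ * ((r ^ 2 * l) ^ (1 - s) * I ^ s)) ≤ (1 - s) * hypersingularIntegral s (g ∘ T) := by
  obtain ⟨r, hr, hball⟩ := exists_ball_inner_smul_map_le hl hH hzero hκ
  refine ⟨r, hr, fun s ⟨hs, hs₁⟩ I hI T hT hIT => ?_⟩
  have hint := integrable_div_norm_rpow_of_isBigO hs hs₁ (hg.comp T.measurable)
    (isBigO_norm_sq_of_sub_inner_map (isLittleO_comp_sub_inner_map hzero T))
    (abs_comp_le_of_abs_le hgrowth T)
  have hlower := le_hypersingularIntegral_comp hs₁ hr hT hg₀ hball hint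
  have hscale := rpow_mul_rpow_le_mul_div_rpow hI hIT (norm_pos_iff.2 hT) hl hr
    (mul_opNorm_sq_le_trace_adjoint_comp_comp hl.le hH T) (by linarith) hs₁
  have htrace : LinearMap.trace ℝ E (T.adjoint ∘L (κ • H) ∘L T) =
      κ * LinearMap.trace ℝ E (T.adjoint ∘L H ∘L T) := by
    simp
  rw [htrace] at hlower
  set F := LinearMap.trace ℝ E (T.adjoint ∘L H ∘L T)
  calc (volume : Measure E).toSphere.real univ / (2 * finrank ℝ E) *
        (κ * ((r ^ 2 * l) ^ (1 - s) * I ^ s))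
      ≤ (volume : Measure E).toSphere.real univ / (2 * finrank ℝ E) *
        (κ * (F * (r / ‖T‖) ^ (2 - 2 * s))) := by gcongr
    _ = (1 - s) * (κ * F / finrank ℝ E * ((volume : Measure E).toSphere.real univ *
        ((r / ‖T‖) ^ (2 - 2 * s) / (2 - 2 * s)))) := by
        have : 1 - s ≠ 0 := by linarith
        rw [show 2 - 2 * s = 2 * (1 - s) by ring]
        field_simp
    _ ≤ (1 - s) * hypersingularIntegral s (g ∘ T) :=
        mul_le_mul_of_nonneg_left hlower (by linarith)

lemma eventually_forall_le_mul_hypersingularIntegral_comp {ι : Type*} {T : ι → E →L[ℝ] E}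
    (hT : ∀ i, T i ≠ 0) (hg : Measurable g) (hg₀ : ∀ y, 0 ≤ g y)
    (hgrowth : ∀ y, |g y| ≤ M * ‖y‖)
    (hzero : (fun y => g y - ⟪y, H y⟫) =o[𝓝 0] fun y => ‖y‖ ^ 2)
    (hl : 0 < l) (hH : ∀ v, l * ‖v‖ ^ 2 ≤ ⟪v, H v⟫) {I b : ℝ} (hI : 0 ≤ I)
    (hle : ∀ i, I ≤ LinearMap.trace ℝ E ((T i).adjoint ∘L H ∘L T i))
    (hb : b < (volume : Measure E).toSphere.real univ / (2 * finrank ℝ E) * I) :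
    ∀ᶠ s in 𝓝[<] 1, ∀ i, b ≤ (1 - s) * hypersingularIntegral s (g ∘ T i) := by
  set c := (volume : Measure E).toSphere.real univ / (2 * finrank ℝ E)
  obtain ⟨κ, hbκ, hκ₀, hκ⟩ : ∃ κ, b < c * (κ * I) ∧ 0 ≤ κ ∧ κ < 1 := by
    have hlim : Tendsto (fun κ => c * (κ * I)) (𝓝[<] 1) (𝓝 (c * I)) :=
      ((by fun_prop : Continuous fun κ => c * (κ * I)).tendsto' 1 _ (by rw [one_mul])).mono_left
        nhdsWithin_le_nhds
    exact ((hlim.eventually_const_lt hb).and (Ico_mem_nhdsLT one_pos)).exists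
  obtain ⟨r, hr, hbound⟩ :=
    exists_forall_le_mul_hypersingularIntegral_comp hg hg₀ hgrowth hzero hl hH hκ₀ hκ
  have hlim : Tendsto (fun s : ℝ => c * (κ * ((r ^ 2 * l) ^ (1 - s) * I ^ s))) (𝓝[<] 1)
      (𝓝 (c * (κ * I))) := by
    have hbase : ContinuousAt (fun s : ℝ => (r ^ 2 * l) ^ (1 - s)) 1 :=
      continuousAt_const.rpow (by fun_prop) (.inl (by positivity))
    have hpow : ContinuousAt (fun s : ℝ => I ^ s) 1 :=
      continuousAt_const.rpow continuousAt_id (.inr one_pos)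
    simpa using (((hbase.mul hpow).const_mul κ).const_mul c).tendsto.mono_left
      (nhdsWithin_le_nhds (s := Iio 1))
  filter_upwards [hlim.eventually_const_lt hbκ, Ioo_mem_nhdsLT (by norm_num : (1 / 2 : ℝ) < 1)]
    with s hlt hs i using hlt.le.trans (hbound s hs I hI (T i) (hT i) (hle i))

theorem tendsto_iInf_mul_hypersingularIntegral_comp {ι : Type*} [Nonempty ι] {T : ι → E →L[ℝ] E}
    (hT : ∀ i, T i ≠ 0) (hg : Measurable g) (hg₀ : ∀ y, 0 ≤ g y)
    (hgrowth : ∀ y, |g y| ≤ M * ‖y‖)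
    (hzero : (fun y => g y - ⟪y, H y⟫) =o[𝓝 0] fun y => ‖y‖ ^ 2)
    (hH : (∃ l > 0, ∀ v, l * ‖v‖ ^ 2 ≤ ⟪v, H v⟫) ∨
      ⨅ i, LinearMap.trace ℝ E ((T i).adjoint ∘L H ∘L T i) ≤ 0) :
    Tendsto (fun s => ⨅ i, (1 - s) * hypersingularIntegral s (g ∘ T i)) (𝓝[<] 1)
      (𝓝 (⨅ i, (volume : Measure E).toSphere.real univ / (2 * finrank ℝ E) *
        LinearMap.trace ℝ E ((T i).adjoint ∘L H ∘L T i))) := by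
  have htrace : ∀ i, 0 ≤ LinearMap.trace ℝ E ((T i).adjoint ∘L H ∘L T i) := fun i =>
    trace_adjoint_comp_comp_nonneg (inner_map_nonneg_of_isLittleO hg₀ hzero) (T i)
  refine tendsto_iInf_of_forall_lt_eventually_le
    (fun i => tendsto_mul_hypersingularIntegral_comp hg hgrowth hzero (T i)) fun b hb => ?_
  rw [← Real.mul_iInf_of_nonneg (by positivity)] at hb
  rcases hH with ⟨l, hl, hH⟩ | hinf
  · exact eventually_forall_le_mul_hypersingularIntegral_comp hT hg hg₀ hgrowth hzero hl hH
      (le_ciInf htrace) (ciInf_le ⟨0, forall_mem_range.2 htrace⟩) hb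
  · filter_upwards [self_mem_nhdsWithin] with s (hs : s < 1) i
    calc b ≤ 0 := hb.le.trans (mul_nonpos_of_nonneg_of_nonpos (by positivity) hinf)
      _ ≤ (1 - s) * hypersingularIntegral s (g ∘ T i) :=
          mul_nonneg (by linarith) (hypersingularIntegral_nonneg (fun z => hg₀ _) s)

end InfimumOverMaps

section SecondDifference

variable {E F : Type*} [NormedAddCommGroup E] [NormedSpace ℝ E] [NormedAddCommGroup F]
  [NormedSpace ℝ F] {f : E → F} {f' : E → E →L[ℝ] F} {D : E →L[ℝ] E →L[ℝ] F} {x : E}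

lemma hasDerivAt_add_sub_sub_sq_smul {y : E} {t : ℝ}
    (hadd : HasFDerivAt f (f' (x + t • y)) (x + t • y))
    (hsub : HasFDerivAt f (f' (x - t • y)) (x - t • y)) :
    HasDerivAt (fun t : ℝ => f (x + t • y) + f (x - t • y) - t ^ 2 • D y y)
      ((f' (x + t • y) - f' x - D (t • y)) y - (f' (x - t • y) - f' x - D (-(t • y))) y) t := by
  have hline : HasDerivAt (fun t : ℝ => x + t • y) y t := by
    simpa using ((hasDerivAt_id t).smul_const y).const_add x
  have hline' : HasDerivAt (fun t : ℝ => x - t • y) (-y) t := by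
    simpa using ((hasDerivAt_id t).smul_const y).const_sub x
  have hsq : HasDerivAt (fun t : ℝ => t ^ 2 • D y y) ((2 * t) • D y y) t := by
    simpa using (hasDerivAt_pow 2 t).smul_const (D y y)
  refine (((hadd.comp_hasDerivAt t hline).add (hsub.comp_hasDerivAt t hline')).sub
    hsq).congr_deriv ?_
  simp only [_root_.sub_apply, map_smul, map_neg, _root_.smul_apply, _root_.neg_apply]
  module

lemma norm_second_difference_sub_le {r ε : ℝ} {y : E}
    (hf : ∀ h, ‖h‖ < r → HasFDerivAt f (f' (x + h)) (x + h))
    (hf' : ∀ h, ‖h‖ < r → ‖f' (x + h) - f' x - D h‖ ≤ ε * ‖h‖) (hε : 0 ≤ ε) (hy : ‖y‖ < r) :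
    ‖f (x + y) + f (x - y) - (2 : ℝ) • f x - D y y‖ ≤ 2 * ε * ‖y‖ ^ 2 := by
  have hty : ∀ t ∈ Icc (0 : ℝ) 1, ‖t • y‖ ≤ ‖y‖ := fun t ht => by
    rw [norm_smul, Real.norm_of_nonneg ht.1]
    exact mul_le_of_le_one_left (norm_nonneg y) ht.2
  have hdiff : ∀ h, ‖h‖ ≤ ‖y‖ → ‖(f' (x + h) - f' x - D h) y‖ ≤ ε * ‖y‖ ^ 2 := fun h hh =>
    calc ‖(f' (x + h) - f' x - D h) y‖ ≤ ε * ‖h‖ * ‖y‖ :=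
          ContinuousLinearMap.le_of_opNorm_le _ (hf' h (hh.trans_lt hy)) y
      _ ≤ ε * ‖y‖ * ‖y‖ := by gcongr
      _ = ε * ‖y‖ ^ 2 := by ring
  have hmvt := norm_image_sub_le_of_norm_deriv_le_segment_01' (C := 2 * ε * ‖y‖ ^ 2)
    (f := fun t : ℝ => f (x + t • y) + f (x - t • y) - t ^ 2 • D y y)
    (fun t ht => (hasDerivAt_add_sub_sub_sq_smul (hf _ ((hty t ht).trans_lt hy))
      (by simpa only [sub_eq_add_neg] using
        hf (-(t • y)) (by simpa using (hty t ht).trans_lt hy))).hasDerivWithinAt)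
    fun t ht => by
      have hadd := hdiff (t • y) (hty t (Ico_subset_Icc_self ht))
      have hsub := hdiff (-(t • y)) (by simpa using hty t (Ico_subset_Icc_self ht))
      rw [← sub_eq_add_neg] at hsub
      exact (norm_sub_le _ _).trans (by linarith)
  convert hmvt using 2
  simp only [one_smul, one_pow, zero_smul, add_zero, sub_zero, ne_eq, OfNat.ofNat_ne_zero,
    not_false_eq_true, zero_pow]
  module

theorem isLittleO_second_difference (hf : ∀ᶠ z in 𝓝 x, HasFDerivAt f (f' z) z)
    (hf' : HasFDerivAt f' D x) :
    (fun y => f (x + y) + f (x - y) - (2 : ℝ) • f x - D y y) =o[𝓝 0] fun y => ‖y‖ ^ 2 := by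
  rw [isLittleO_iff]
  intro ε hε
  have hshift : Tendsto (fun h => x + h) (𝓝 0) (𝓝 x) :=
    (continuous_const_add x).tendsto' 0 x (add_zero x)
  have hbound := (hasFDerivAt_iff_isLittleO_nhds_zero.1 hf').def (half_pos hε)
  obtain ⟨r, hr, hball⟩ := Metric.eventually_nhds_iff.1 ((hshift.eventually hf).and hbound)
  simp only [dist_zero_right] at hball
  filter_upwards [ball_mem_nhds (0 : E) hr] with y hy
  rw [norm_pow, norm_norm]
  convert norm_second_difference_sub_le (fun h hh => (hball hh).1) (fun h hh => (hball hh).2)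
    (half_pos hε).le (mem_ball_zero_iff.1 hy) using 1
  ring

end SecondDifference

section Hessian

variable {n : ℕ} {u : EuclideanSpace ℝ (Fin n) → ℝ} {x : EuclideanSpace ℝ (Fin n)}

lemma delta2_nonneg_of_convexOn (hu : ConvexOn ℝ univ u) (x y : EuclideanSpace ℝ (Fin n)) :
    0 ≤ delta2 u x y := by
  have hmid := hu.2 (mem_univ (x + y)) (mem_univ (x - y)) one_half_pos.le one_half_pos.le
    (add_halves 1)
  rw [show (1 / 2 : ℝ) • (x + y) + (1 / 2 : ℝ) • (x - y) = x by module] at hmid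
  simp only [smul_eq_mul] at hmid
  unfold delta2
  linarith

lemma abs_delta2_le_of_lipschitz {L : ℝ} (hu : ∀ a b, |u a - u b| ≤ L * ‖a - b‖)
    (x y : EuclideanSpace ℝ (Fin n)) : |delta2 u x y| ≤ 2 * L * ‖y‖ :=
  calc |delta2 u x y| = |(u (x + y) - u x) + (u (x - y) - u x)| := by
        unfold delta2
        ring_nf
    _ ≤ |u (x + y) - u x| + |u (x - y) - u x| := abs_add_le _ _
    _ ≤ L * ‖x + y - x‖ + L * ‖x - y - x‖ := add_le_add (hu _ _) (hu _ _)
    _ = 2 * L * ‖y‖ := by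
        rw [add_sub_cancel_left, sub_sub_cancel_left, norm_neg]
        ring

lemma inner_toEuclideanCLM_hess (hu : DifferentiableAt ℝ (fderiv ℝ u) x)
    (y : EuclideanSpace ℝ (Fin n)) :
    ⟪y, toEuclideanCLM (𝕜 := ℝ) (hess u x) y⟫ = fderiv ℝ (fderiv ℝ u) x y y := by
  have hentry : ∀ i j, hess u x i j = fderiv ℝ (fderiv ℝ u) x (EuclideanSpace.single i 1)
      (EuclideanSpace.single j 1) := fun i j => by
    simp [hess, fderiv_clm_apply hu (differentiableAt_const _)]
  have hy : y = ∑ i, y i • EuclideanSpace.single i (1 : ℝ) := by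
    ext i
    simp [Finset.sum_apply, Pi.single_apply]
  rw [inner_toEuclideanCLM]
  conv_rhs => rw [hy]
  simp only [dotProduct, mulVec, hentry, map_sum, map_smul, _root_.sum_apply, _root_.smul_apply,
    smul_eq_mul, Finset.mul_sum]
  rw [Finset.sum_comm]
  exact Finset.sum_congr rfl fun i _ => Finset.sum_congr rfl fun j _ => by ring

lemma isLittleO_delta2_sub_inner_hess (hu : ∀ᶠ z in 𝓝 x, DifferentiableAt ℝ u z)
    (hu' : DifferentiableAt ℝ (fderiv ℝ u) x) :
    (fun y => delta2 u x y - ⟪y, toEuclideanCLM (𝕜 := ℝ) (hess u x) y⟫) =o[𝓝 0]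
      fun y => ‖y‖ ^ 2 := by
  simpa only [inner_toEuclideanCLM_hess hu', delta2, smul_eq_mul] using
    isLittleO_second_difference (hu.mono fun z hz => hz.hasFDerivAt) hu'.hasFDerivAt

end Hessian

section UnimodularMatrices

variable {m : Type*} [Fintype m] [DecidableEq m]

lemma trace_toEuclideanCLM (M : Matrix m m ℝ) :
    LinearMap.trace ℝ _ (toEuclideanCLM (𝕜 := ℝ) M : EuclideanSpace ℝ m →ₗ[ℝ] _) = M.trace := by
  rw [coe_toEuclideanCLM_eq_toEuclideanLin, toEuclideanLin_eq_toLin_orthonormal, trace_toLin_eq]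

lemma trace_adjoint_comp_comp_toEuclideanCLM (A H : Matrix m m ℝ) :
    LinearMap.trace ℝ (EuclideanSpace ℝ m) ((toEuclideanCLM (𝕜 := ℝ) A).adjoint ∘L
      toEuclideanCLM (𝕜 := ℝ) H ∘L toEuclideanCLM (𝕜 := ℝ) A :) = (A * Aᵀ * H).trace := by
  have hcomp : (toEuclideanCLM (𝕜 := ℝ) A).adjoint ∘L toEuclideanCLM (𝕜 := ℝ) H ∘L
      toEuclideanCLM (𝕜 := ℝ) A = toEuclideanCLM (𝕜 := ℝ) (Aᵀ * (H * A)) := by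
    rw [← conjTranspose_eq_transpose_of_trivial, ← star_eq_conjTranspose, map_mul, map_mul,
      map_star]
    rfl
  rw [hcomp, trace_toEuclideanCLM, ← Matrix.mul_assoc, trace_mul_comm, Matrix.mul_assoc]

variable (m) in
/-- The symmetric positive definite matrices of determinant one, over which the infima defining the
Monge–Ampère operators are taken. -/
abbrev UnimodularPosDef : Type _ := {A : Matrix m m ℝ // A.PosDef ∧ A.det = 1}

instance : Nonempty (UnimodularPosDef m) := ⟨⟨1, .one, det_one⟩⟩

lemma sInf_setOf_posDef_det_eq_one (f : Matrix m m ℝ → ℝ) :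
    sInf {z | ∃ A : Matrix m m ℝ, A.PosDef ∧ A.det = 1 ∧ z = f A} =
      ⨅ A : UnimodularPosDef m, f A := by
  congr 1
  ext z
  simp [and_assoc, eq_comm]

lemma toEuclideanCLM_ne_zero_of_det_eq_one [Nonempty m] {A : Matrix m m ℝ} (hA : A.det = 1) :
    toEuclideanCLM (𝕜 := ℝ) A ≠ 0 := by
  rw [Ne, map_eq_zero_iff _ (EquivLike.injective _)]
  rintro rfl
  simp at hA

/-- For a unit vector `v`, the symmetric matrix acting as `ε` on the orthogonal complement of `v`
and as `ε ^ (1 - card m)` on the line spanned by `v`, so that its determinant is one. As `ε → 0` it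
flattens every direction except `v`. -/
noncomputable def unimodularStretch (v : m → ℝ) (ε : ℝ) : Matrix m m ℝ :=
  ε • (1 + ((ε ^ Fintype.card m)⁻¹ - 1) • vecMulVec v v)

lemma posDef_unimodularStretch (v : m → ℝ) {ε : ℝ} (hε : 0 < ε) (hε₁ : ε ≤ 1) :
    (unimodularStretch v ε).PosDef := by
  have hcoeff : 0 ≤ (ε ^ Fintype.card m)⁻¹ - 1 :=
    sub_nonneg.2 ((one_le_inv₀ (by positivity)).2 (pow_le_one₀ hε.le hε₁))
  have hvv : (vecMulVec v v).PosSemidef := by simpa using posSemidef_vecMulVec_self_star v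
  exact (PosDef.one.add_posSemidef (hvv.smul hcoeff)).smul hε

lemma det_unimodularStretch {v : m → ℝ} (hv : v ⬝ᵥ v = 1) {ε : ℝ} (hε : ε ≠ 0) :
    (unimodularStretch v ε).det = 1 := by
  rw [unimodularStretch, det_smul, ← smul_vecMulVec, vecMulVec_eq Unit,
    det_one_add_replicateCol_mul_replicateRow, dotProduct_smul, hv, smul_eq_mul, mul_one,
    add_sub_cancel, mul_inv_cancel₀ (pow_ne_zero _ hε)]

lemma trace_unimodularStretch_mul_transpose_mul {H : Matrix m m ℝ} {v : m → ℝ}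
    (hv : v ⬝ᵥ H *ᵥ v = 0) (ε : ℝ) :
    (unimodularStretch v ε * (unimodularStretch v ε)ᵀ * H).trace = ε ^ 2 * H.trace := by
  have hvH : (vecMulVec v v * H).trace = 0 := by
    rw [trace_mul_comm, mul_vecMulVec, trace_vecMulVec, dotProduct_comm, hv]
  have hvvH : (vecMulVec v v * vecMulVec v v * H).trace = 0 := by
    rw [vecMulVec_mul_vecMulVec, vecMulVec_smul, Matrix.smul_mul, trace_smul, hvH, smul_zero]
  simp only [unimodularStretch, transpose_smul, transpose_add, transpose_one, transpose_vecMulVec,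
    Matrix.smul_mul, Matrix.mul_smul, Matrix.add_mul, Matrix.mul_add, Matrix.one_mul,
    Matrix.mul_one, trace_smul, trace_add, hvH, hvvH, smul_eq_mul]
  ring

lemma iInf_trace_le_zero_of_dotProduct_mulVec_eq_zero {H : Matrix m m ℝ} {v : m → ℝ}
    (hv : v ⬝ᵥ v = 1) (hvH : v ⬝ᵥ H *ᵥ v = 0)
    (hH : ∀ A : UnimodularPosDef m, 0 ≤ (A.1 * A.1ᵀ * H).trace) :
    ⨅ A : UnimodularPosDef m, (A.1 * A.1ᵀ * H).trace ≤ 0 := by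
  have hlim : Tendsto (fun ε : ℝ => ε ^ 2 * H.trace) (𝓝[>] 0) (𝓝 0) :=
    ((by fun_prop : Continuous fun ε : ℝ => ε ^ 2 * H.trace).tendsto' 0 0 (by simp)).mono_left
      nhdsWithin_le_nhds
  refine ge_of_tendsto hlim ?_
  filter_upwards [Ioc_mem_nhdsGT one_pos] with ε ⟨hε, hε₁⟩
  rw [← trace_unimodularStretch_mul_transpose_mul hvH ε]
  exact ciInf_le ⟨0, forall_mem_range.2 hH⟩
    (⟨_, posDef_unimodularStretch v hε hε₁, det_unimodularStretch hv hε.ne'⟩ : UnimodularPosDef m)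

lemma coercive_or_iInf_trace_le_zero [Nonempty m] {H : Matrix m m ℝ}
    (hH : ∀ v : EuclideanSpace ℝ m, 0 ≤ ⟪v, toEuclideanCLM (𝕜 := ℝ) H v⟫) :
    (∃ l > 0, ∀ v : EuclideanSpace ℝ m, l * ‖v‖ ^ 2 ≤ ⟪v, toEuclideanCLM (𝕜 := ℝ) H v⟫) ∨
      ⨅ A : UnimodularPosDef m, (A.1 * A.1ᵀ * H).trace ≤ 0 := by
  refine (exists_inner_map_eq_zero_or_coercive hH).symm.imp_right ?_
  rintro ⟨v, hv, hvH⟩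
  refine iInf_trace_le_zero_of_dotProduct_mulVec_eq_zero (v := v.ofLp) ?_
    (by rwa [inner_toEuclideanCLM] at hvH) fun A => ?_
  · simpa [hv] using (inner_toEuclideanCLM 1 v v).symm
  · rw [← trace_adjoint_comp_comp_toEuclideanCLM]
    exact trace_adjoint_comp_comp_nonneg hH _

end UnimodularMatrices

section FractionalMongeAmpere

variable {n : ℕ} {u : EuclideanSpace ℝ (Fin n) → ℝ} {x : EuclideanSpace ℝ (Fin n)}

lemma toSphere_real_univ_eq_surfOmega (hn : n ≠ 0) :
    (volume : Measure (EuclideanSpace ℝ (Fin n))).toSphere.real univ = surfOmega n := by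
  have : Nonempty (Fin n) := ⟨⟨0, Nat.pos_of_ne_zero hn⟩⟩
  have hpi : √Real.pi ^ n = Real.pi ^ ((n : ℝ) / 2) := by
    rw [Real.sqrt_eq_rpow, ← Real.rpow_mul_natCast Real.pi_pos.le, one_div_mul_eq_div]
  rw [Measure.toSphere_real_apply_univ, finrank_euclideanSpace_fin, Measure.real,
    EuclideanSpace.volume_ball, surfOmega, Fintype.card_fin, ENNReal.ofReal_one, one_pow, one_mul,
    hpi, Real.Gamma_add_one (by positivity), ENNReal.toReal_ofReal (by positivity)]
  field_simp

lemma integral_comp_linearMap_of_det_eq_one {E F : Type*} [NormedAddCommGroup E]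
    [NormedSpace ℝ E] [FiniteDimensional ℝ E] [MeasurableSpace E] [BorelSpace E]
    [NormedAddCommGroup F] [NormedSpace ℝ F] {μ : Measure E} [μ.IsAddHaarMeasure]
    {f : E →ₗ[ℝ] E} (hf : f.det = 1) (h : E → F) : ∫ z, h (f z) ∂μ = ∫ y, h y ∂μ := by
  have hdet : f.det ≠ 0 := hf ▸ one_ne_zero
  have hmap : μ.map f = μ := by
    rw [Measure.map_linearMap_addHaar_eq_smul_addHaar μ hdet, hf, inv_one, abs_one,
      ENNReal.ofReal_one, one_smul]
  have hemb : MeasurableEmbedding f :=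
    f.continuous_of_finiteDimensional.measurableEmbedding (f.equivOfDetNeZero hdet).injective
  conv_rhs => rw [← hmap, hemb.integral_map]

lemma LA_eq_hypersingularIntegral {A : Matrix (Fin n) (Fin n) ℝ} (hA : A.det = 1) (s : ℝ) :
    LA s A u x = 1 / 2 * hypersingularIntegral s (delta2 u x ∘ toEuclideanCLM (𝕜 := ℝ) A) := by
  have hcancel : ∀ z : EuclideanSpace ℝ (Fin n), (EuclideanSpace.equiv (Fin n) ℝ).symm
      (A⁻¹ *ᵥ EuclideanSpace.equiv (Fin n) ℝ (toEuclideanCLM (𝕜 := ℝ) A z)) = z := fun z => by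
    ext i
    change (A⁻¹ *ᵥ (A *ᵥ z.ofLp)) i = z.ofLp i
    rw [mulVec_mulVec, nonsing_inv_mul A (hA ▸ isUnit_one), one_mulVec]
  have hdet : LinearMap.det (toEuclideanLin A) = 1 := (LinearMap.det_toLpLin 2 A).trans hA
  rw [LA, ← integral_comp_linearMap_of_det_eq_one hdet, ← coe_toEuclideanCLM_eq_toEuclideanLin]
  simp only [kernelA, hcancel, hypersingularIntegral, finrank_euclideanSpace_fin,
    Function.comp_apply, ContinuousLinearMap.coe_coe]

lemma one_sub_mul_sInf_LA {s : ℝ} (hs : s ≤ 1) :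
    (1 - s) * sInf {z : ℝ | ∃ A : Matrix (Fin n) (Fin n) ℝ,
      A.PosDef ∧ A.det = 1 ∧ z = LA s A u x} =
      1 / 2 * ⨅ A : UnimodularPosDef (Fin n),
        (1 - s) * hypersingularIntegral s (delta2 u x ∘ toEuclideanCLM (𝕜 := ℝ) A.1) := by
  rw [sInf_setOf_posDef_det_eq_one fun A => LA s A u x, Real.mul_iInf_of_nonneg (sub_nonneg.2 hs),
    Real.mul_iInf_of_nonneg one_half_pos.le]
  refine iInf_congr fun A => ?_
  rw [LA_eq_hypersingularIntegral A.2.2]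
  ring

theorem stmt9_general {M : ℝ} (hn : n ≠ 0) (hmeas : Measurable (delta2 u x))
    (hnonneg : ∀ y, 0 ≤ delta2 u x y) (hgrowth : ∀ y, |delta2 u x y| ≤ M * ‖y‖)
    (hu : ∀ᶠ z in 𝓝 x, DifferentiableAt ℝ u z) (hu' : DifferentiableAt ℝ (fderiv ℝ u) x) :
    Tendsto (fun s : ℝ => (1 - s) *
        sInf {z : ℝ | ∃ A : Matrix (Fin n) (Fin n) ℝ, A.PosDef ∧ A.det = 1 ∧ z = LA s A u x})
      (𝓝[<] 1) (𝓝 (surfOmega n / (4 * n) *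
        sInf {z : ℝ | ∃ A : Matrix (Fin n) (Fin n) ℝ, A.PosDef ∧ A.det = 1 ∧
          z = (A * Aᵀ * hess u x).trace})) := by
  have : Nonempty (Fin n) := ⟨⟨0, Nat.pos_of_ne_zero hn⟩⟩
  have hzero := isLittleO_delta2_sub_inner_hess hu hu'
  have hlim := tendsto_iInf_mul_hypersingularIntegral_comp
    (T := fun A : UnimodularPosDef (Fin n) => toEuclideanCLM (𝕜 := ℝ) A.1)
    (fun A => toEuclideanCLM_ne_zero_of_det_eq_one A.2.2) hmeas hnonneg hgrowth hzero
    (by simpa only [trace_adjoint_comp_comp_toEuclideanCLM] using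
      coercive_or_iInf_trace_le_zero (inner_map_nonneg_of_isLittleO hnonneg hzero))
  simp only [trace_adjoint_comp_comp_toEuclideanCLM, toSphere_real_univ_eq_surfOmega hn,
    finrank_euclideanSpace_fin] at hlim
  have hsphere : 0 ≤ surfOmega n := by
    rw [← toSphere_real_univ_eq_surfOmega hn]
    positivity
  rw [← Real.mul_iInf_of_nonneg (by positivity)] at hlim
  rw [sInf_setOf_posDef_det_eq_one (m := Fin n) fun A => (A * Aᵀ * hess u x).trace,
    show ∀ I, surfOmega n / (4 * n) * I = 1 / 2 * (surfOmega n / (2 * n) * I) by intro I; ring]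
  refine (hlim.const_mul (1 / 2)).congr' ?_
  filter_upwards [self_mem_nhdsWithin] with s (hs : s < 1) using (one_sub_mul_sInf_LA hs.le).symm

end FractionalMongeAmpere

theorem stmt9 (n : ℕ) (hn : 1 ≤ n) (u : EuclideanSpace ℝ (Fin n) → ℝ)
    (hconv : ConvexOn ℝ Set.univ u) (hC2 : ContDiff ℝ 2 u)
    (L : ℝ) (hLip : ∀ a b : EuclideanSpace ℝ (Fin n), |u a - u b| ≤ L * ‖a - b‖)
    (x : EuclideanSpace ℝ (Fin n)) :
    Tendsto (fun s : ℝ => (1 - s) *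
        sInf {z : ℝ | ∃ A : Matrix (Fin n) (Fin n) ℝ, A.PosDef ∧ A.det = 1 ∧ z = LA s A u x})
      (nhdsWithin 1 (Set.Ioo (1 / 2 : ℝ) 1))
      (nhds (surfOmega n / (4 * n) *
        sInf {z : ℝ | ∃ A : Matrix (Fin n) (Fin n) ℝ, A.PosDef ∧ A.det = 1 ∧
          z = (A * Aᵀ * hess u x).trace})) := by
  have hmeas : Measurable (delta2 u x) := by
    have := hC2.continuous
    unfold delta2
    fun_prop
  have hfderiv : ContDiff ℝ 1 (fderiv ℝ u) := hC2.fderiv_right le_rfl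
  exact (stmt9_general (Nat.one_le_iff_ne_zero.1 hn) hmeas (delta2_nonneg_of_convexOn hconv x)
    (abs_delta2_le_of_lipschitz hLip x)
    (.of_forall (hC2.differentiable two_ne_zero)) (hfderiv.differentiable one_ne_zero x)).mono_left
    (nhdsWithin_mono 1 Ioo_subset_Iio_self)
end

section
/- Let k ≥ 1, 0 < s < 1, and ε₁, …, ε_k > 0. Then ∫_{S^{k−1}} (∑_{j=1}^k εⱼ² xⱼ²)^{−(k+2s)/2} dσ(x) ≥ (ω_k/k)·(∑_{i=1}^k ε_i^{−2s})/(∏_{j=1}^k εⱼ). -/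
open MeasureTheory

/-!
If `H` is positively homogeneous of degree `-n` on an `n`-dimensional space, the Jacobian
`r ^ (n - 1)` of polar coordinates turns `H` along each ray into `r⁻¹` times its value on the
sphere. Hence the integral of `H` over a shell `{1 ≤ g < e}` equals its integral over the unit
sphere, *whatever* the positively homogeneous gauge `g` is: each ray contributes the factor
`∫_a^{ea} dr / r = 1`. Comparing the shells of `‖A ·‖` and `‖·‖` by a linear change of variables
gives `∫ H (A θ) dσ = |det A|⁻¹ ∫ H dσ`.

With `H y = ‖A⁻¹ y‖ ^ (2s) * ‖y‖ ^ (-(n + 2s))` and `A = diag(ε)`, the integral in question becomes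
`(∏ εⱼ)⁻¹ ∫ (∑ εⱼ⁻² θⱼ²) ^ s dσ`. As `∑ θⱼ² = 1` on the sphere, concavity of `t ↦ t ^ s` bounds the
integrand from below by `∑ θⱼ² εⱼ ^ (-2s)`, and `∫ θⱼ² dσ = ω_n / n` by symmetry.
-/

open ENNReal Metric Module Set

theorem setLIntegral_ofReal_inv_Ico {a : ℝ} (ha : 0 < a) :
    ∫⁻ r in Ico a (Real.exp 1 * a), ENNReal.ofReal r⁻¹ = 1 := by
  have hab : a ≤ Real.exp 1 * a := le_mul_of_one_le_left ha.le (Real.one_le_exp zero_le_one)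
  have hmem : (0 : ℝ) ∉ uIcc a (Real.exp 1 * a) := notMem_uIcc_of_lt ha (ha.trans_le hab)
  have hint : IntegrableOn (fun r : ℝ ↦ r⁻¹) (Ioc a (Real.exp 1 * a)) :=
    (intervalIntegrable_inv_iff.2 (.inr hmem)).1
  have hnn : 0 ≤ᵐ[volume.restrict (Ioc a (Real.exp 1 * a))] fun r : ℝ ↦ r⁻¹ := by
    filter_upwards [ae_restrict_mem measurableSet_Ioc] with r hr
    exact inv_nonneg.2 (ha.trans hr.1).le
  rw [Measure.restrict_congr_set Ico_ae_eq_Ioc, ← ofReal_integral_eq_lintegral_ofReal hint hnn,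
    ← intervalIntegral.integral_of_le hab, integral_inv hmem, mul_div_cancel_right₀ _ ha.ne',
    Real.log_exp, ofReal_one]

section Haar

variable {E : Type*} [NormedAddCommGroup E] [NormedSpace ℝ E] [FiniteDimensional ℝ E]
  [MeasurableSpace E] [BorelSpace E] (μ : Measure E) [μ.IsAddHaarMeasure]

theorem integrable_toSphere_of_continuous {f : sphere (0 : E) 1 → ℝ} (hf : Continuous f) :
    Integrable f μ.toSphere :=
  hf.integrable_of_hasCompactSupport (.of_compactSpace f)

theorem lintegral_eq_lintegral_toSphere_setLIntegral_Ioi [Nontrivial E] {f : E → ℝ≥0∞}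
    (hf : Measurable f) :
    ∫⁻ x, f x ∂μ = ∫⁻ θ : sphere (0 : E) 1, (∫⁻ r in Ioi (0 : ℝ),
      ENNReal.ofReal (r ^ (finrank ℝ E - 1)) * f (r • (θ : E))) ∂μ.toSphere := by
  have hf' : Measurable fun p : sphere (0 : E) 1 × Ioi (0 : ℝ) ↦ f ((p.2 : ℝ) • (p.1 : E)) :=
    hf.comp (by fun_prop)
  calc
    _ = ∫⁻ x : ({0}ᶜ : Set E), f x ∂(μ.comap (↑)) := by
      rw [lintegral_subtype_comap (measurableSet_singleton _).compl, restrict_compl_singleton]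
    _ = ∫⁻ p, f ((p.2 : ℝ) • (p.1 : E)) ∂μ.toSphere.prod (.volumeIoiPow (finrank ℝ E - 1)) := by
      rw [← μ.measurePreserving_homeomorphUnitSphereProd.lintegral_comp hf']
      refine lintegral_congr fun x ↦ ?_
      have hx : ‖(x : E)‖ ≠ 0 := norm_ne_zero_iff.2 x.2
      simp [smul_smul, hx]
    _ = ∫⁻ θ, ∫⁻ r : Ioi (0 : ℝ), f ((r : ℝ) • (θ : E))
          ∂(.volumeIoiPow (finrank ℝ E - 1)) ∂μ.toSphere :=
      lintegral_prod _ hf'.aemeasurable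
    _ = _ := by
      refine lintegral_congr fun θ ↦ ?_
      rw [Measure.volumeIoiPow, lintegral_withDensity_eq_lintegral_mul _ (by fun_prop)
        (by fun_prop)]
      exact lintegral_subtype_comap measurableSet_Ioi
        fun r : ℝ ↦ ENNReal.ofReal (r ^ (finrank ℝ E - 1)) * f (r • (θ : E))

theorem setLIntegral_shell_eq_lintegral_toSphere [Nontrivial E] {H : E → ℝ≥0∞} (hH : Measurable H)
    (hH_smul : ∀ r : ℝ, 0 < r → ∀ x, H (r • x) = ENNReal.ofReal (r ^ finrank ℝ E)⁻¹ * H x)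
    {g : E → ℝ} (hg : Measurable g) (hg_smul : ∀ r : ℝ, 0 < r → ∀ x, g (r • x) = r * g x)
    (hg_pos : ∀ x, x ≠ 0 → 0 < g x) :
    ∫⁻ x in g ⁻¹' Ico 1 (Real.exp 1), H x ∂μ = ∫⁻ θ, H θ ∂μ.toSphere := by
  have hshell : MeasurableSet (g ⁻¹' Ico 1 (Real.exp 1)) := hg measurableSet_Ico
  rw [← lintegral_indicator hshell,
    lintegral_eq_lintegral_toSphere_setLIntegral_Ioi μ (hH.indicator hshell)]
  refine lintegral_congr fun θ ↦ ?_
  have hgθ : 0 < g θ := hg_pos θ (ne_zero_of_mem_unit_sphere θ)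
  have hray : ∀ r ∈ Ioi (0 : ℝ), ENNReal.ofReal (r ^ (finrank ℝ E - 1)) *
      (g ⁻¹' Ico 1 (Real.exp 1)).indicator H (r • (θ : E)) =
      (Ico (g θ)⁻¹ (Real.exp 1 * (g θ)⁻¹)).indicator (fun r ↦ ENNReal.ofReal r⁻¹ * H θ) r := by
    intro r (hr : 0 < r)
    have hmem : r • (θ : E) ∈ g ⁻¹' Ico 1 (Real.exp 1) ↔
        r ∈ Ico (g θ)⁻¹ (Real.exp 1 * (g θ)⁻¹) := by
      rw [mem_preimage, hg_smul r hr, mem_Ico, mem_Ico, inv_le_iff_one_le_mul₀ hgθ,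
        lt_mul_inv_iff₀ hgθ]
    have hpow : r ^ (finrank ℝ E - 1) * (r ^ finrank ℝ E)⁻¹ = r⁻¹ := by
      rw [← pow_sub_one_mul (finrank_pos (R := ℝ) (M := E)).ne' r]
      field_simp
    classical
    simp only [indicator_apply, hmem, mul_ite, mul_zero, hH_smul r hr, ← mul_assoc,
      ← ENNReal.ofReal_mul (pow_nonneg hr.le _), hpow]
  have hsub : Ico (g θ)⁻¹ (Real.exp 1 * (g θ)⁻¹) ⊆ Ioi 0 :=
    fun r hr ↦ (inv_pos.2 hgθ).trans_le hr.1
  rw [setLIntegral_congr_fun measurableSet_Ioi hray, setLIntegral_indicator measurableSet_Ico,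
    inter_eq_left.2 hsub, lintegral_mul_const _ (by fun_prop),
    setLIntegral_ofReal_inv_Ico (inv_pos.2 hgθ), one_mul]

theorem lintegral_toSphere_comp_continuousLinearEquiv (A : E ≃L[ℝ] E) {H : E → ℝ≥0∞}
    (hH : Measurable H)
    (hH_smul : ∀ r : ℝ, 0 < r → ∀ x, H (r • x) = ENNReal.ofReal (r ^ finrank ℝ E)⁻¹ * H x) :
    ∫⁻ θ, H (A θ) ∂μ.toSphere =
      ENNReal.ofReal |(A : E →L[ℝ] E).det|⁻¹ * ∫⁻ θ, H θ ∂μ.toSphere := by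
  cases subsingleton_or_nontrivial E
  · simp [μ.toSphere_eq_zero_iff.2 inferInstance]
  have hmap : μ.map A = ENNReal.ofReal |(A : E →L[ℝ] E).det|⁻¹ • μ := by
    rw [← abs_inv]
    exact Measure.map_linearMap_addHaar_eq_smul_addHaar μ A.toLinearEquiv.isUnit_det'.ne_zero
  calc
    _ = ∫⁻ x in (‖A ·‖) ⁻¹' Ico 1 (Real.exp 1), H (A x) ∂μ :=
      (setLIntegral_shell_eq_lintegral_toSphere μ (by fun_prop)
        (fun r hr x ↦ by rw [map_smul, hH_smul r hr]) A.continuous.norm.measurable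
        (fun r hr x ↦ by rw [map_smul, norm_smul_of_nonneg hr.le])
        (fun x hx ↦ norm_pos_iff.2 (A.map_ne_zero_iff.2 hx))).symm
    _ = ∫⁻ y in (‖·‖) ⁻¹' Ico 1 (Real.exp 1), H y ∂(μ.map A) := by
      rw [setLIntegral_map (measurable_norm measurableSet_Ico) hH (by fun_prop)]
      rfl
    _ = _ := by
      rw [hmap, Measure.restrict_smul, lintegral_smul_measure, smul_eq_mul,
        setLIntegral_shell_eq_lintegral_toSphere μ hH hH_smul measurable_norm
        (fun r hr x ↦ norm_smul_of_nonneg hr.le x) (fun x hx ↦ norm_pos_iff.2 hx)]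

theorem integral_toSphere_comp_continuousLinearEquiv (A : E ≃L[ℝ] E) {H : E → ℝ}
    (hH : Measurable H) (hH_nonneg : 0 ≤ H)
    (hH_smul : ∀ r : ℝ, 0 < r → ∀ x, H (r • x) = (r ^ finrank ℝ E)⁻¹ * H x) :
    ∫ θ, H (A θ) ∂μ.toSphere = |(A : E →L[ℝ] E).det|⁻¹ * ∫ θ, H θ ∂μ.toSphere := by
  have toReal_lintegral {φ : sphere (0 : E) 1 → E} (hφ : Measurable φ) :
      ∫ θ, H (φ θ) ∂μ.toSphere = (∫⁻ θ, ENNReal.ofReal (H (φ θ)) ∂μ.toSphere).toReal :=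
    integral_eq_lintegral_of_nonneg_ae (.of_forall fun θ ↦ hH_nonneg (φ θ))
      (hH.comp hφ).aestronglyMeasurable
  rw [toReal_lintegral (by fun_prop), toReal_lintegral (by fun_prop),
    lintegral_toSphere_comp_continuousLinearEquiv μ A hH.ennreal_ofReal fun r hr x ↦ by
      rw [hH_smul r hr, ENNReal.ofReal_mul (by positivity)],
    toReal_mul, toReal_ofReal (by positivity)]

theorem integral_toSphere_norm_rpow_neg (A : E ≃L[ℝ] E) (p : ℝ) :
    ∫ θ, ‖A θ‖ ^ (-(finrank ℝ E + p)) ∂μ.toSphere =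
      |(A : E →L[ℝ] E).det|⁻¹ * ∫ θ, ‖A.symm θ‖ ^ p ∂μ.toSphere := by
  let H : E → ℝ := fun y ↦ ‖A.symm y‖ ^ p * ‖y‖ ^ (-(finrank ℝ E + p))
  have hH_smul (r : ℝ) (hr : 0 < r) (y : E) : H (r • y) = (r ^ finrank ℝ E)⁻¹ * H y := by
    have hpow : r ^ p * r ^ (-(finrank ℝ E + p)) = (r ^ finrank ℝ E)⁻¹ := by
      rw [← Real.rpow_add hr, ← Real.rpow_natCast, ← Real.rpow_neg hr.le]
      ring_nf
    simp only [H, map_smul, norm_smul_of_nonneg hr.le, Real.mul_rpow hr.le (norm_nonneg _), ← hpow]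
    ring
  have hchange := integral_toSphere_comp_continuousLinearEquiv μ A (H := H) (by fun_prop)
    (fun y ↦ by positivity) hH_smul
  simpa [H] using hchange

end Haar

section InnerProductSpace

variable {E : Type*} [NormedAddCommGroup E] [InnerProductSpace ℝ E] [FiniteDimensional ℝ E]
  [MeasurableSpace E] [BorelSpace E] (μ : Measure E) [μ.IsAddHaarMeasure]

theorem integral_toSphere_comp_linearIsometryEquiv (L : E ≃ₗᵢ[ℝ] E) {f : E → ℝ}
    (hf : Measurable f) (hf_nonneg : 0 ≤ f) :
    ∫ θ, f (L θ) ∂μ.toSphere = ∫ θ, f θ ∂μ.toSphere := by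
  let H : E → ℝ := fun y ↦ (‖y‖ ^ finrank ℝ E)⁻¹ * f (‖y‖⁻¹ • y)
  have hH_smul (r : ℝ) (hr : 0 < r) (y : E) : H (r • y) = (r ^ finrank ℝ E)⁻¹ * H y := by
    simp only [H, norm_smul_of_nonneg hr.le, mul_pow, mul_inv, smul_smul, mul_assoc]
    rw [mul_left_comm r⁻¹, inv_mul_cancel₀ hr.ne', mul_one]
  have hdet : |(L.toContinuousLinearEquiv : E →L[ℝ] E).det| = 1 := by
    rw [← L.toLinearIsometry.normDet_eq_one, L.toLinearIsometry.toLinearMap.normDet_eq_abs_det]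
    rfl
  have hchange := integral_toSphere_comp_continuousLinearEquiv μ L.toContinuousLinearEquiv (H := H)
    (by fun_prop) (fun y ↦ mul_nonneg (by positivity) (hf_nonneg _)) hH_smul
  simpa [H, hdet] using hchange

end InnerProductSpace

section CoordScaling

variable {ι : Type*}

/-- The diagonal linear automorphism `x ↦ (εⱼ xⱼ)ⱼ` of Euclidean space, for which `‖A θ‖ ^ 2` is the
quadratic form `∑ εⱼ² θⱼ²`. -/
noncomputable def coordScaling (ε : ι → ℝ) (hε : ∀ j, ε j ≠ 0) :
    EuclideanSpace ℝ ι ≃L[ℝ] EuclideanSpace ℝ ι :=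
  (EuclideanSpace.equiv ι ℝ).trans
    ((ContinuousLinearEquiv.piCongrRight fun j ↦ .smulLeft (Units.mk0 (ε j) (hε j))).trans
      (EuclideanSpace.equiv ι ℝ).symm)

variable {ε : ι → ℝ} (hε : ∀ j, ε j ≠ 0)

theorem coordScaling_apply (x : EuclideanSpace ℝ ι) (j : ι) :
    coordScaling ε hε x j = ε j * x j := rfl

theorem coordScaling_symm_apply (x : EuclideanSpace ℝ ι) (j : ι) :
    (coordScaling ε hε).symm x j = (ε j)⁻¹ * x j := rfl

theorem det_coordScaling [Fintype ι] :
    (coordScaling ε hε : EuclideanSpace ℝ ι →L[ℝ] EuclideanSpace ℝ ι).det = ∏ j, ε j := by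
  calc
    _ = LinearMap.det
          (LinearMap.pi fun j ↦ (ε j • .id) ∘ₗ LinearMap.proj j : (ι → ℝ) →ₗ[ℝ] ι → ℝ) :=
      LinearMap.det_conj _ (EuclideanSpace.equiv ι ℝ).symm.toLinearEquiv
    _ = ∏ j, ε j := by simp [LinearMap.det_pi]

end CoordScaling

section EuclideanSpace

variable {ι : Type*} [Fintype ι]

local notation "σ" => Measure.toSphere (volume : Measure (EuclideanSpace ℝ ι))

theorem sum_sq_eq_one_of_mem_sphere (θ : sphere (0 : EuclideanSpace ℝ ι) 1) :
    ∑ j, θ.1 j ^ 2 = 1 := by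
  rw [← EuclideanSpace.real_norm_sq_eq, norm_eq_of_mem_sphere, one_pow]

theorem toSphere_real_univ_eq_surfOmega_s11 [Nonempty ι] :
    (σ).real univ = surfOmega (Fintype.card ι) := by
  have hcard : (0 : ℝ) < Fintype.card ι := by exact_mod_cast Fintype.card_pos
  have hΓ : 0 < Real.Gamma (Fintype.card ι / 2) := Real.Gamma_pos_of_pos (half_pos hcard)
  have hsqrt : √Real.pi ^ Fintype.card ι = Real.pi ^ ((Fintype.card ι : ℝ) / 2) := by
    rw [Real.sqrt_eq_rpow, ← Real.rpow_mul_natCast Real.pi_pos.le, one_div_mul_eq_div]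
  rw [Measure.toSphere_real_apply_univ, measureReal_def, EuclideanSpace.volume_ball, ofReal_one,
    one_pow, one_mul, finrank_euclideanSpace, Real.Gamma_add_one (by positivity),
    toReal_ofReal (by positivity), surfOmega, hsqrt]
  field_simp [hΓ.ne']

theorem integral_toSphere_coord_sq_eq (i j : ι) :
    ∫ θ, θ.1 i ^ 2 ∂σ = ∫ θ, θ.1 j ^ 2 ∂σ := by
  classical
  simpa using integral_toSphere_comp_linearIsometryEquiv (volume : Measure (EuclideanSpace ℝ ι))
    (.piLpCongrLeft 2 ℝ ℝ (Equiv.swap i j)) (f := fun x ↦ x j ^ 2) (by fun_prop)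
    (fun x ↦ sq_nonneg _)

theorem integral_toSphere_coord_sq (i : ι) :
    ∫ θ, θ.1 i ^ 2 ∂σ = surfOmega (Fintype.card ι) / Fintype.card ι := by
  have : Nonempty ι := ⟨i⟩
  have hcard : (Fintype.card ι : ℝ) ≠ 0 := by exact_mod_cast Fintype.card_ne_zero
  rw [eq_div_iff hcard, eq_comm]
  calc
    surfOmega (Fintype.card ι)
    _ = ∫ θ, ∑ j, θ.1 j ^ 2 ∂σ := by
      simp_rw [sum_sq_eq_one_of_mem_sphere]
      rw [integral_const, smul_eq_mul, mul_one, toSphere_real_univ_eq_surfOmega_s11]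
    _ = ∑ j, ∫ θ, θ.1 j ^ 2 ∂σ :=
      integral_finsetSum _ fun j _ ↦ integrable_toSphere_of_continuous _ (by fun_prop)
    _ = _ := by
      rw [Finset.sum_congr rfl fun j _ ↦ integral_toSphere_coord_sq_eq j i, Finset.sum_const,
        Finset.card_univ, nsmul_eq_mul, mul_comm]

theorem surfOmega_mul_sum_rpow_le_integral_toSphere {w : ι → ℝ} (hw : ∀ j, 0 ≤ w j) {s : ℝ}
    (hs0 : 0 ≤ s) (hs1 : s ≤ 1) :
    surfOmega (Fintype.card ι) / Fintype.card ι * ∑ j, w j ^ s ≤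
      ∫ θ, (∑ j, w j * θ.1 j ^ 2) ^ s ∂σ := by
  have jensen (θ : sphere (0 : EuclideanSpace ℝ ι) 1) :
      ∑ j, θ.1 j ^ 2 * w j ^ s ≤ (∑ j, w j * θ.1 j ^ 2) ^ s := by
    simpa [mul_comm] using (Real.concaveOn_rpow hs0 hs1).le_map_sum
      (fun j _ ↦ sq_nonneg _) (sum_sq_eq_one_of_mem_sphere θ) (fun j _ ↦ mem_Ici.2 (hw j))
  calc
    _ = ∫ θ, ∑ j, θ.1 j ^ 2 * w j ^ s ∂σ := by
      rw [integral_finsetSum _ fun j _ ↦ integrable_toSphere_of_continuous _ (by fun_prop)]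
      simp_rw [integral_mul_const, integral_toSphere_coord_sq, Finset.mul_sum]
    _ ≤ _ := integral_mono (integrable_toSphere_of_continuous _ (by fun_prop))
      (integrable_toSphere_of_continuous _ (.rpow_const (by fun_prop) fun _ ↦ .inr hs0)) jensen

theorem integral_toSphere_sum_rpow_neg {ε : ι → ℝ} (hε : ∀ j, ε j ≠ 0) (s : ℝ) :
    ∫ θ, (∑ j, ε j ^ 2 * θ.1 j ^ 2) ^ (-(((Fintype.card ι : ℝ) + 2 * s) / 2)) ∂σ =
      |∏ j, ε j|⁻¹ * ∫ θ, (∑ j, (ε j)⁻¹ ^ 2 * θ.1 j ^ 2) ^ s ∂σ := by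
  have norm_rpow (x : EuclideanSpace ℝ ι) (p : ℝ) : ‖x‖ ^ p = (∑ j, x j ^ 2) ^ (p / 2) := by
    rw [← EuclideanSpace.real_norm_sq_eq, ← Real.rpow_natCast_mul (norm_nonneg x)]
    congr 1
    push_cast
    ring
  have hscale := integral_toSphere_norm_rpow_neg (volume : Measure (EuclideanSpace ℝ ι))
    (coordScaling ε hε) (2 * s)
  simpa only [norm_rpow, coordScaling_apply, coordScaling_symm_apply, mul_pow, det_coordScaling,
    finrank_euclideanSpace, neg_div, mul_div_cancel_left₀ s two_ne_zero] using hscale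

end EuclideanSpace

theorem stmt11 (k : ℕ) (hk : 1 ≤ k) (s : ℝ) (hs0 : 0 < s) (hs1 : s < 1)
    (ε : Fin k → ℝ) (hε : ∀ j, 0 < ε j) :
    surfOmega k / k * ((∑ i, ε i ^ (-(2 * s))) / ∏ j, ε j) ≤
      ∫ x : Metric.sphere (0 : EuclideanSpace ℝ (Fin k)) 1,
        (∑ j, ε j ^ 2 * ((x : EuclideanSpace ℝ (Fin k)) j) ^ 2) ^ (-(((k : ℝ) + 2 * s) / 2))
        ∂(volume : Measure (EuclideanSpace ℝ (Fin k))).toSphere := by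
  have hprod : 0 < ∏ j, ε j := Finset.prod_pos fun j _ ↦ hε j
  have hpow (j : Fin k) : ((ε j)⁻¹ ^ 2) ^ s = ε j ^ (-(2 * s)) := by
    rw [← Real.rpow_natCast_mul (inv_nonneg.2 (hε j).le), Real.inv_rpow (hε j).le,
      Real.rpow_neg (hε j).le, Nat.cast_ofNat]
  have hlower := surfOmega_mul_sum_rpow_le_integral_toSphere
    (fun j ↦ sq_nonneg (ε j)⁻¹) hs0.le hs1.le
  have hscale := integral_toSphere_sum_rpow_neg (fun j ↦ (hε j).ne') s
  simp only [Fintype.card_fin, hpow] at hlower hscale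
  rw [hscale, abs_of_pos hprod, ← mul_div_assoc, div_eq_inv_mul]
  exact mul_le_mul_of_nonneg_left hlower (inv_pos.2 hprod).le
end

section
/- Let k ≥ 1, 0 < s < 1, and ε₁, …, ε_k > 0. Then ∫_{S^{k−1}} (∑_{j=1}^k εⱼ² xⱼ²)^{−(k+2s)/2} dσ(x) ≤ (π^{k/2}/(s·Γ(2−s)·Γ(k/2 + s)))·(∑_{i=1}^k ε_i^{−2s})/(∏_{j=1}^k εⱼ). -/
open MeasureTheory

/-!
Both sides are compared through the Gaussian moment
`∫ ‖x‖ ^ (2 * s) * exp (-∑ j, ε j ^ 2 * x j ^ 2)` over `ℝ ^ k`. In polar coordinates the radial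
integral is a Gamma integral, so the moment equals `Γ (k / 2 + s) / 2` times the integral over the
sphere. On the other hand `s ≤ 1` gives `‖x‖ ^ (2 * s) ≤ ∑ i, |x i| ^ (2 * s)`, and each summand
contributes a product of one-dimensional Gamma integrals. The resulting constant
`2 * π ^ ((k - 1) / 2) * Γ (s + 1 / 2)` is weakened to `π ^ (k / 2) / (s * Γ (2 - s))` by convexity
of `Γ`.
-/

section PolarCoordinates

theorem lintegral_volumeIoiPow (n : ℕ) {f : ℝ → ENNReal} (hf : Measurable f) :
    ∫⁻ r : Set.Ioi (0 : ℝ), f r ∂Measure.volumeIoiPow n =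
      ∫⁻ r in Set.Ioi (0 : ℝ), ENNReal.ofReal (r ^ n) * f r := by
  rw [Measure.volumeIoiPow,
    lintegral_withDensity_eq_lintegral_mul₀ (by fun_prop) (by fun_prop)]
  exact lintegral_subtype_comap measurableSet_Ioi fun r : ℝ ↦ ENNReal.ofReal (r ^ n) * f r

variable {E : Type*} [NormedAddCommGroup E] [NormedSpace ℝ E] [FiniteDimensional ℝ E]
  [Nontrivial E] [MeasurableSpace E] [BorelSpace E] (μ : Measure E) [μ.IsAddHaarMeasure]

theorem lintegral_eq_lintegral_toSphere_lintegral_Ioi {f : E → ENNReal} (hf : Measurable f) :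
    ∫⁻ x, f x ∂μ = ∫⁻ θ, (∫⁻ r in Set.Ioi (0 : ℝ),
      ENNReal.ofReal (r ^ (Module.finrank ℝ E - 1)) * f (r • (θ : E))) ∂μ.toSphere := by
  calc
    ∫⁻ x, f x ∂μ = ∫⁻ x : ({0}ᶜ : Set E), f x ∂μ.comap Subtype.val := by
      rw [lintegral_subtype_comap (measurableSet_singleton 0).compl f, restrict_compl_singleton]
    _ = ∫⁻ x : ({0}ᶜ : Set E), (fun p : Metric.sphere (0 : E) 1 × Set.Ioi (0 : ℝ) ↦
          f (p.2.1 • p.1.1)) (homeomorphUnitSphereProd E x) ∂μ.comap Subtype.val := by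
      refine lintegral_congr fun x ↦ ?_
      simp only [← homeomorphUnitSphereProd_symm_apply_coe, Homeomorph.symm_apply_apply]
    _ = ∫⁻ p, f (p.2.1 • p.1.1)
          ∂μ.toSphere.prod (Measure.volumeIoiPow (Module.finrank ℝ E - 1)) :=
      μ.measurePreserving_homeomorphUnitSphereProd.lintegral_comp_emb
        (Homeomorph.measurableEmbedding _)
        fun p : Metric.sphere (0 : E) 1 × Set.Ioi (0 : ℝ) ↦ f (p.2.1 • p.1.1)
    _ = _ := by
      rw [lintegral_prod _ (by fun_prop)]
      exact lintegral_congr fun θ ↦ lintegral_volumeIoiPow _ (f := fun r ↦ f (r • θ.1))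
        (by fun_prop)

theorem lintegral_Ioi_rpow_mul_exp_neg_mul_rpow {p q b : ℝ} (hp : 0 < p) (hq : -1 < q)
    (hb : 0 < b) :
    ∫⁻ r in Set.Ioi (0 : ℝ), ENNReal.ofReal (r ^ q * Real.exp (-b * r ^ p)) =
      ENNReal.ofReal (b ^ (-(q + 1) / p) * (1 / p) * Real.Gamma ((q + 1) / p)) := by
  have hΓ := Real.Gamma_pos_of_pos (div_pos (neg_lt_iff_pos_add.1 hq) hp)
  have hpos : 0 < b ^ (-(q + 1) / p) * (1 / p) * Real.Gamma ((q + 1) / p) := by positivity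
  rw [← integral_rpow_mul_exp_neg_mul_rpow hp hq hb] at hpos ⊢
  refine (ofReal_integral_eq_lintegral_ofReal (.of_integral_ne_zero hpos.ne') ?_).symm
  filter_upwards [ae_restrict_mem measurableSet_Ioi] with r hr
  have := Set.mem_Ioi.1 hr
  positivity

theorem lintegral_norm_rpow_mul_exp_neg_of_homogeneous {p q : ℝ} (hp : 0 < p)
    (hq : -(Module.finrank ℝ E : ℝ) < q) {Q : E → ℝ} (hQm : Measurable Q)
    (hQ_smul : ∀ r > 0, ∀ x, Q (r • x) = r ^ p * Q x) (hQ_pos : ∀ x ≠ 0, 0 < Q x) :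
    ∫⁻ x, ENNReal.ofReal (‖x‖ ^ q * Real.exp (-Q x)) ∂μ =
      ENNReal.ofReal (Real.Gamma ((Module.finrank ℝ E + q) / p) / p) *
        ∫⁻ θ : Metric.sphere (0 : E) 1,
          ENNReal.ofReal (Q θ ^ (-((Module.finrank ℝ E + q) / p))) ∂μ.toSphere := by
  set n := Module.finrank ℝ E
  have hn_cast : ((n - 1 : ℕ) : ℝ) = n - 1 := Nat.cast_pred Module.finrank_pos
  have hΓ : 0 < Real.Gamma ((n + q) / p) := Real.Gamma_pos_of_pos (div_pos (by linarith) hp)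
  have radial (θ : Metric.sphere (0 : E) 1) {r : ℝ} (hr : 0 < r) :
      ENNReal.ofReal (r ^ (n - 1)) * ENNReal.ofReal (‖r • θ.1‖ ^ q * Real.exp (-Q (r • θ.1))) =
        ENNReal.ofReal (r ^ (n - 1 + q) * Real.exp (-Q θ * r ^ p)) := by
    rw [← ENNReal.ofReal_mul (by positivity), hQ_smul r hr, norm_smul, norm_eq_of_mem_sphere,
      mul_one, Real.norm_of_nonneg hr.le, Real.rpow_add hr, ← hn_cast, Real.rpow_natCast,
      mul_assoc, neg_mul, mul_comm (Q θ)]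
  rw [lintegral_eq_lintegral_toSphere_lintegral_Ioi μ (by fun_prop),
    ← lintegral_const_mul _ (by fun_prop)]
  refine lintegral_congr fun θ ↦ ?_
  rw [setLIntegral_congr_fun measurableSet_Ioi fun r hr ↦ radial θ hr,
    lintegral_Ioi_rpow_mul_exp_neg_mul_rpow hp (by linarith)
      (hQ_pos θ (ne_zero_of_mem_unit_sphere θ)), ← ENNReal.ofReal_mul (by positivity)]
  ring_nf

end PolarCoordinates

section DiagonalGaussian

theorem integral_abs_rpow_mul_exp_neg_sq_mul_sq {q e : ℝ} (hq : -1 < q) (he : 0 < e) :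
    ∫ t : ℝ, |t| ^ q * Real.exp (-(e ^ 2 * t ^ 2)) =
      e ^ (-(q + 1)) * Real.Gamma ((q + 1) / 2) := by
  have he_rpow : (e ^ 2) ^ (-(q + 1) / 2) = e ^ (-(q + 1)) := by
    rw [← Real.rpow_natCast_mul he.le]
    push_cast
    ring_nf
  calc
    _ = 2 * ∫ t in Set.Ioi (0 : ℝ), t ^ q * Real.exp (-e ^ 2 * t ^ (2 : ℝ)) := by
      simpa [← neg_mul] using
        integral_comp_abs (f := fun t : ℝ ↦ t ^ q * Real.exp (-e ^ 2 * t ^ (2 : ℝ)))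
    _ = e ^ (-(q + 1)) * Real.Gamma ((q + 1) / 2) := by
      rw [integral_rpow_mul_exp_neg_mul_rpow two_pos hq (by positivity), he_rpow]
      ring

theorem integrable_abs_rpow_mul_exp_neg_sq_mul_sq {q e : ℝ} (hq : -1 < q) (he : 0 < e) :
    Integrable fun t : ℝ ↦ |t| ^ q * Real.exp (-(e ^ 2 * t ^ 2)) := by
  refine .of_integral_ne_zero ?_
  rw [integral_abs_rpow_mul_exp_neg_sq_mul_sq hq he]
  have := Real.Gamma_pos_of_pos (show 0 < (q + 1) / 2 by linarith)
  positivity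

theorem rpow_sum_le_sum_rpow_of_le_one {ι : Type*} {t : Finset ι} {a : ι → ℝ}
    (ha : ∀ i ∈ t, 0 ≤ a i) {s : ℝ} (hs0 : 0 < s) (hs1 : s ≤ 1) :
    (∑ i ∈ t, a i) ^ s ≤ ∑ i ∈ t, a i ^ s :=
  Finset.le_sum_of_subadditive_on_pred (· ^ s) (0 ≤ ·) (Real.zero_rpow hs0.ne').le
    (fun _ _ hx hy ↦ Real.rpow_add_le_add_rpow hx hy hs0.le hs1) (fun _ _ ↦ add_nonneg) _ ha

variable {ι : Type*} [Fintype ι] {ε : ι → ℝ}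

theorem lintegral_prod_abs_rpow_mul_exp_neg_sum_sq_mul_sq {q : ι → ℝ} (hq : ∀ j, -1 < q j)
    (hε : ∀ j, 0 < ε j) :
    ∫⁻ x : ι → ℝ, ENNReal.ofReal
        ((∏ j, |x j| ^ q j) * Real.exp (-∑ j, ε j ^ 2 * x j ^ 2)) =
      ENNReal.ofReal (∏ j, ε j ^ (-(q j + 1)) * Real.Gamma ((q j + 1) / 2)) := by
  simp_rw [← Finset.sum_neg_distrib, Real.exp_sum, ← Finset.prod_mul_distrib,
    ← integral_abs_rpow_mul_exp_neg_sq_mul_sq (hq _) (hε _)]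
  rw [← integral_fintype_prod_volume_eq_prod, ← ofReal_integral_eq_lintegral_ofReal]
  · exact .fintype_prod fun j ↦ integrable_abs_rpow_mul_exp_neg_sq_mul_sq (hq j) (hε j)
  · exact .of_forall fun x ↦ by positivity

theorem lintegral_abs_rpow_mul_exp_neg_sum_sq_mul_sq {q : ℝ} (hq : -1 < q)
    (hε : ∀ j, 0 < ε j) (i : ι) :
    ∫⁻ x : ι → ℝ, ENNReal.ofReal (|x i| ^ q * Real.exp (-∑ j, ε j ^ 2 * x j ^ 2)) =
      ENNReal.ofReal (√Real.pi ^ (Fintype.card ι - 1) * Real.Gamma ((q + 1) / 2) *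
        (ε i ^ (-q) / ∏ j, ε j)) := by
  classical
  have abs_rpow_eq_prod (x : ι → ℝ) : |x i| ^ q = ∏ j, |x j| ^ (Pi.single i q : ι → ℝ) j := by
    rw [Fintype.prod_eq_single i fun j hj ↦ by simp [hj], Pi.single_eq_same]
  have prod_Gamma : ∏ j, Real.Gamma (((Pi.single i q : ι → ℝ) j + 1) / 2) =
      Real.Gamma ((q + 1) / 2) * √Real.pi ^ (Fintype.card ι - 1) := by
    rw [← Finset.mul_prod_erase _ _ (Finset.mem_univ i), Pi.single_eq_same,
      Finset.prod_congr rfl fun j hj ↦ by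
        rw [Pi.single_eq_of_ne (Finset.ne_of_mem_erase hj), zero_add, Real.Gamma_one_half_eq],
      Finset.prod_const, Finset.card_erase_of_mem (Finset.mem_univ i), Finset.card_univ]
  have prod_scale : ∏ j, ε j ^ (-((Pi.single i q : ι → ℝ) j + 1)) = ε i ^ (-q) / ∏ j, ε j := by
    simp_rw [neg_add, Real.rpow_add (hε _), Real.rpow_neg_one, Finset.prod_mul_distrib,
      Finset.prod_inv_distrib, div_eq_mul_inv]
    rw [Fintype.prod_eq_single i fun j hj ↦ by simp [hj], Pi.single_eq_same]
  simp_rw [abs_rpow_eq_prod]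
  rw [lintegral_prod_abs_rpow_mul_exp_neg_sum_sq_mul_sq _ hε, Finset.prod_mul_distrib,
    prod_Gamma, prod_scale]
  · ring_nf
  · intro j
    obtain rfl | hj := eq_or_ne j i
    · simpa using hq
    · simp [hj]

theorem norm_rpow_le_sum_abs_rpow {q : ℝ} (hq0 : 0 < q) (hq2 : q ≤ 2) (x : EuclideanSpace ℝ ι) :
    ‖x‖ ^ q ≤ ∑ i, |x i| ^ q := by
  have sq_rpow_half {t : ℝ} (ht : 0 ≤ t) : (t ^ 2) ^ (q / 2) = t ^ q := by
    rw [← Real.rpow_natCast_mul ht]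
    push_cast
    ring_nf
  calc
    ‖x‖ ^ q = (∑ i, |x i| ^ 2) ^ (q / 2) := by
      simp_rw [← sq_rpow_half (norm_nonneg x), EuclideanSpace.norm_sq_eq, Real.norm_eq_abs]
    _ ≤ ∑ i, (|x i| ^ 2) ^ (q / 2) :=
      rpow_sum_le_sum_rpow_of_le_one (fun _ _ ↦ sq_nonneg _) (by linarith) (by linarith)
    _ = ∑ i, |x i| ^ q := by simp_rw [sq_rpow_half (abs_nonneg _)]

theorem lintegral_norm_rpow_mul_exp_neg_sum_sq_mul_sq_le {q : ℝ} (hq0 : 0 < q) (hq2 : q ≤ 2)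
    (hε : ∀ j, 0 < ε j) :
    ∫⁻ x : EuclideanSpace ℝ ι,
        ENNReal.ofReal (‖x‖ ^ q * Real.exp (-∑ j, ε j ^ 2 * x j ^ 2)) ≤
      ENNReal.ofReal (√Real.pi ^ (Fintype.card ι - 1) * Real.Gamma ((q + 1) / 2) *
        ((∑ i, ε i ^ (-q)) / ∏ j, ε j)) := by
  calc
    _ ≤ ∫⁻ x : EuclideanSpace ℝ ι, ∑ i,
          ENNReal.ofReal (|x i| ^ q * Real.exp (-∑ j, ε j ^ 2 * x j ^ 2)) := by
      refine lintegral_mono fun x ↦ ?_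
      rw [← ENNReal.ofReal_sum_of_nonneg fun i _ ↦ by positivity, ← Finset.sum_mul]
      gcongr
      exact norm_rpow_le_sum_abs_rpow hq0 hq2 x
    _ = ∑ i, ∫⁻ x : ι → ℝ,
          ENNReal.ofReal (|x i| ^ q * Real.exp (-∑ j, ε j ^ 2 * x j ^ 2)) := by
      rw [lintegral_finsetSum _ fun i _ ↦ by fun_prop]
      exact Finset.sum_congr rfl fun i _ ↦
        (PiLp.volume_preserving_ofLp ι).lintegral_comp
          (f := fun x ↦ ENNReal.ofReal (|x i| ^ q * Real.exp (-∑ j, ε j ^ 2 * x j ^ 2)))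
          (by fun_prop)
    _ = _ := by
      simp_rw [lintegral_abs_rpow_mul_exp_neg_sum_sq_mul_sq (by linarith : -1 < q) hε]
      rw [← ENNReal.ofReal_sum_of_nonneg fun i _ ↦ ?_, ← Finset.mul_sum, ← Finset.sum_div]
      exact mul_nonneg (by positivity) (div_nonneg (Real.rpow_nonneg (hε i).le _)
        (Finset.prod_nonneg fun j _ ↦ (hε j).le))

theorem sum_sq_mul_sq_pos (hε : ∀ j, ε j ≠ 0) {x : EuclideanSpace ℝ ι} (hx : x ≠ 0) :
    0 < ∑ j, ε j ^ 2 * x j ^ 2 := by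
  obtain ⟨j, hj⟩ : ∃ j, x j ≠ 0 := by
    contrapose! hx
    exact PiLp.ext hx
  exact Finset.sum_pos' (fun i _ ↦ by positivity)
    ⟨j, Finset.mem_univ j, mul_pos (sq_pos_of_ne_zero (hε j)) (sq_pos_of_ne_zero hj)⟩

theorem sum_rpow_div_prod_nonneg (hε : ∀ j, 0 ≤ ε j) (q : ℝ) :
    0 ≤ (∑ i, ε i ^ q) / ∏ j, ε j :=
  div_nonneg (Finset.sum_nonneg fun i _ ↦ Real.rpow_nonneg (hε i) q)
    (Finset.prod_nonneg fun j _ ↦ hε j)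

theorem integral_sphere_sum_sq_mul_sq_rpow_le [Nonempty ι] {q : ℝ} (hq0 : 0 < q) (hq2 : q ≤ 2)
    (hε : ∀ j, 0 < ε j) :
    ∫ x : Metric.sphere (0 : EuclideanSpace ℝ ι) 1,
        (∑ j, ε j ^ 2 * (x : EuclideanSpace ℝ ι) j ^ 2) ^ (-((Fintype.card ι + q) / 2))
        ∂(volume : Measure (EuclideanSpace ℝ ι)).toSphere ≤
      2 * √Real.pi ^ (Fintype.card ι - 1) * Real.Gamma ((q + 1) / 2) /
        Real.Gamma ((Fintype.card ι + q) / 2) * ((∑ i, ε i ^ (-q)) / ∏ j, ε j) := by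
  have hΓ := Real.Gamma_pos_of_pos (show 0 < (Fintype.card ι + q) / 2 by positivity)
  have polar := lintegral_norm_rpow_mul_exp_neg_of_homogeneous
    (volume : Measure (EuclideanSpace ℝ ι)) (p := 2) (q := q) two_pos
    (by linarith [(Module.finrank ℝ (EuclideanSpace ℝ ι)).cast_nonneg (α := ℝ)])
    (Q := fun x ↦ ∑ j, ε j ^ 2 * x j ^ 2) (by fun_prop)
    (fun r _ x ↦ by simp [mul_pow, Finset.mul_sum, mul_left_comm])
    fun _ ↦ sum_sq_mul_sq_pos fun j ↦ (hε j).ne'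
  rw [finrank_euclideanSpace] at polar
  have moment_le := lintegral_norm_rpow_mul_exp_neg_sum_sq_mul_sq_le hq0 hq2 hε
  rw [polar] at moment_le
  rw [integral_eq_lintegral_of_nonneg_ae (.of_forall fun x ↦ by positivity)
    (Measurable.aestronglyMeasurable (by fun_prop))]
  refine ENNReal.toReal_le_of_le_ofReal
    (mul_nonneg (by positivity) (sum_rpow_div_prod_nonneg (fun j ↦ (hε j).le) _)) ?_
  calc
    _ ≤ ENNReal.ofReal (√Real.pi ^ (Fintype.card ι - 1) * Real.Gamma ((q + 1) / 2) *
          ((∑ i, ε i ^ (-q)) / ∏ j, ε j)) /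
        ENNReal.ofReal (Real.Gamma ((Fintype.card ι + q) / 2) / 2) := by
      rwa [ENNReal.le_div_iff_mul_le (by simp [hΓ]) (by simp), mul_comm]
    _ = _ := by
      rw [← ENNReal.ofReal_div_of_pos (by positivity)]
      congr 1
      field_simp

end DiagonalGaussian

theorem Gamma_add_le_of_le_one {a t : ℝ} (ha : 0 < a) (ht0 : 0 ≤ t) (ht1 : t ≤ 1) :
    Real.Gamma (a + t) ≤ (1 - t + t * a) * Real.Gamma a := by
  have convex := Real.convexOn_Gamma.2 (Set.mem_Ioi.2 ha) (Set.mem_Ioi.2 (add_pos ha one_pos))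
    (sub_nonneg.2 ht1) ht0 (sub_add_cancel 1 t)
  simp only [smul_eq_mul, Real.Gamma_add_one ha.ne'] at convex
  calc
    Real.Gamma (a + t) = Real.Gamma ((1 - t) * a + t * (a + 1)) := by ring_nf
    _ ≤ (1 - t) * Real.Gamma a + t * (a * Real.Gamma a) := convex
    _ = (1 - t + t * a) * Real.Gamma a := by ring

theorem two_mul_Gamma_mul_Gamma_le_sqrt_pi {s : ℝ} (hs0 : 0 ≤ s) (hs1 : s ≤ 1) :
    2 * (s * Real.Gamma (2 - s) * Real.Gamma (1 / 2 + s)) ≤ √Real.pi := by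
  have Gamma_two_sub_le : Real.Gamma (2 - s) ≤ 1 := by
    have := Gamma_add_le_of_le_one one_pos (sub_nonneg.2 hs1) (sub_le_self 1 hs0)
    rw [Real.Gamma_one, show 1 + (1 - s) = 2 - s by ring] at this
    linarith
  have Gamma_half_add_le : Real.Gamma (1 / 2 + s) ≤ (1 - s / 2) * √Real.pi := by
    have := Gamma_add_le_of_le_one one_half_pos hs0 hs1
    rw [Real.Gamma_one_half_eq] at this
    linarith
  calc
    2 * (s * Real.Gamma (2 - s) * Real.Gamma (1 / 2 + s))
      ≤ 2 * (s * 1 * ((1 - s / 2) * √Real.pi)) := by gcongr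
    _ = (1 - (1 - s) ^ 2) * √Real.pi := by ring
    _ ≤ 1 * √Real.pi := by
      gcongr
      linarith [sq_nonneg (1 - s)]
    _ = √Real.pi := one_mul _

theorem stmt12_general {ι : Type*} [Fintype ι] [Nonempty ι] {s : ℝ} (hs0 : 0 < s) (hs1 : s ≤ 1)
    {ε : ι → ℝ} (hε : ∀ j, 0 < ε j) :
    ∫ x : Metric.sphere (0 : EuclideanSpace ℝ ι) 1,
        (∑ j, ε j ^ 2 * (x : EuclideanSpace ℝ ι) j ^ 2) ^ (-((Fintype.card ι + 2 * s) / 2))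
        ∂(volume : Measure (EuclideanSpace ℝ ι)).toSphere ≤
      Real.pi ^ ((Fintype.card ι : ℝ) / 2) /
          (s * Real.Gamma (2 - s) * Real.Gamma (Fintype.card ι / 2 + s)) *
        ((∑ i, ε i ^ (-(2 * s))) / ∏ j, ε j) := by
  refine (integral_sphere_sum_sq_mul_sq_rpow_le (by linarith) (by linarith) hε).trans ?_
  have := Real.Gamma_pos_of_pos (show 0 < 2 - s by linarith)
  have pi_rpow : Real.pi ^ ((Fintype.card ι : ℝ) / 2) =
      √Real.pi ^ (Fintype.card ι - 1) * √Real.pi := by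
    rw [pow_sub_one_mul Fintype.card_ne_zero, Real.sqrt_eq_rpow,
      ← Real.rpow_mul_natCast Real.pi_pos.le, one_div_mul_eq_div]
  have constant_le := two_mul_Gamma_mul_Gamma_le_sqrt_pi hs0.le hs1
  rw [show (2 * s + 1) / 2 = 1 / 2 + s by ring,
    show (Fintype.card ι + 2 * s) / 2 = Fintype.card ι / 2 + s by ring, pi_rpow]
  refine mul_le_mul_of_nonneg_right ?_ (sum_rpow_div_prod_nonneg (fun j ↦ (hε j).le) _)
  rw [div_le_div_iff₀ (by positivity) (by positivity)]
  calc
    _ = √Real.pi ^ (Fintype.card ι - 1) * Real.Gamma (Fintype.card ι / 2 + s) *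
          (2 * (s * Real.Gamma (2 - s) * Real.Gamma (1 / 2 + s))) := by ring
    _ ≤ √Real.pi ^ (Fintype.card ι - 1) * Real.Gamma (Fintype.card ι / 2 + s) * √Real.pi := by
      gcongr
    _ = _ := by ring

theorem stmt12 (k : ℕ) (hk : 1 ≤ k) (s : ℝ) (hs0 : 0 < s) (hs1 : s < 1)
    (ε : Fin k → ℝ) (hε : ∀ j, 0 < ε j) :
    (∫ x : Metric.sphere (0 : EuclideanSpace ℝ (Fin k)) 1,
        (∑ j, ε j ^ 2 * ((x : EuclideanSpace ℝ (Fin k)) j) ^ 2) ^ (-(((k : ℝ) + 2 * s) / 2))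
        ∂(volume : Measure (EuclideanSpace ℝ (Fin k))).toSphere) ≤
      Real.pi ^ ((k : ℝ) / 2) / (s * Real.Gamma (2 - s) * Real.Gamma ((k : ℝ) / 2 + s)) *
        ((∑ i, ε i ^ (-(2 * s))) / ∏ j, ε j) := by
  have : Nonempty (Fin k) := ⟨⟨0, hk⟩⟩
  simpa only [Fintype.card_fin] using stmt12_general hs0 hs1.le hε
end

section
/- Let k ≥ 1, 0 < s < 1, and ε₁, …, ε_k > 0. Then (∏_{j=1}^k εⱼ)·∫_{S^{k−1}} (∑_{j=1}^k εⱼ² xⱼ²)^{−(k+2s)/2} dσ(x) = ∫_{S^{k−1}} (∑_{j=1}^k εⱼ^{−2} yⱼ²)^{s} dσ(y). -/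
open MeasureTheory

/-!
A linear automorphism `L` of a finite-dimensional normed space acts on directions by
`w ↦ L w / ‖L w‖`, and the surface measure transforms under this map with density
`|det L| ‖L w‖ ^ (-dim E)`. Indeed, if `f` is constant on open rays from the origin, integrating
`f` in polar coordinates over the region `ρ < 1` of a gauge `ρ` gives
`(dim E)⁻¹ ∫ f(w) ρ(w) ^ (-dim E) dσ(w)`. Take `ρ = ‖·‖` for `f` and `ρ = ‖L ·‖` for `f ∘ L`: the
two integrals over `E` differ by the factor `|det L|`. The ray-constant function
`f(y) = (‖L⁻¹ y‖ / ‖y‖) ^ p`, for which `f (L w) = ‖L w‖ ^ (-p)` on the sphere, then yields the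
identity, with `L` diagonal and `p = 2s`.
-/

open Set Metric Module Measure
open scoped ENNReal

theorem natCast_mul_volumeIoiPow_pred_Iio {n : ℕ} (hn : 0 < n) (r : Ioi (0 : ℝ)) :
    n * volumeIoiPow (n - 1) (Iio r) = ENNReal.ofReal (r.1 ^ n) := by
  rw [volumeIoiPow_apply_Iio, Nat.sub_add_cancel hn, Nat.cast_pred hn, sub_add_cancel,
    ← ENNReal.ofReal_natCast, ← ENNReal.ofReal_mul (Nat.cast_nonneg _),
    mul_div_cancel₀ _ (Nat.cast_pos.2 hn).ne']

section NormedSpace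

variable {E : Type*} [NormedAddCommGroup E] [NormedSpace ℝ E] [FiniteDimensional ℝ E]
  [MeasurableSpace E] [BorelSpace E] (μ : Measure E) [μ.IsAddHaarMeasure]

theorem lintegral_eq_lintegral_toSphere_volumeIoiPow [Nontrivial E] {g : E → ℝ≥0∞}
    (hg : Measurable g) :
    ∫⁻ x, g x ∂μ =
      ∫⁻ w : sphere (0 : E) 1, ∫⁻ r : Ioi (0 : ℝ), g (r.1 • w.1) ∂volumeIoiPow (finrank ℝ E - 1)
        ∂μ.toSphere := by
  have hg_polar : Measurable fun q : sphere (0 : E) 1 × Ioi (0 : ℝ) ↦ g (q.2.1 • q.1.1) :=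
    hg.comp (by fun_prop)
  have polar_eq (x : ({0}ᶜ : Set E)) :
      (homeomorphUnitSphereProd E x).2.1 • (homeomorphUnitSphereProd E x).1.1 = x.1 := by
    simp [smul_inv_smul₀ (norm_ne_zero_iff.2 x.2)]
  calc
    ∫⁻ x, g x ∂μ = ∫⁻ x : ({0}ᶜ : Set E), g x ∂μ.comap (↑) := by
      rw [lintegral_subtype_comap (measurableSet_singleton _).compl, restrict_compl_singleton]
    _ = ∫⁻ q, g (q.2.1 • q.1.1) ∂μ.toSphere.prod (volumeIoiPow (finrank ℝ E - 1)) := by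
      simpa only [polar_eq] using
        μ.measurePreserving_homeomorphUnitSphereProd.lintegral_comp hg_polar
    _ = _ := lintegral_prod _ hg_polar.aemeasurable

theorem finrank_mul_setLIntegral_gauge_lt_one {f : E → ℝ≥0∞} {ρ : E → ℝ} (hf : Measurable f)
    (hf_smul : ∀ r > (0 : ℝ), ∀ x, f (r • x) = f x) (hρ : Measurable ρ)
    (hρ_smul : ∀ r > (0 : ℝ), ∀ x, ρ (r • x) = r * ρ x) (hρ_pos : ∀ x ≠ 0, 0 < ρ x) :
    finrank ℝ E * ∫⁻ x in {x | ρ x < 1}, f x ∂μ =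
      ∫⁻ w : sphere (0 : E) 1, ENNReal.ofReal ((ρ w)⁻¹ ^ finrank ℝ E) * f w ∂μ.toSphere := by
  rcases subsingleton_or_nontrivial E with _ | _
  · simp [finrank_zero_of_subsingleton, μ.toSphere_eq_zero_iff.2 ‹_›]
  have region_meas : MeasurableSet {x | ρ x < 1} := measurableSet_lt hρ measurable_const
  rw [← lintegral_indicator region_meas,
    lintegral_eq_lintegral_toSphere_volumeIoiPow μ (hf.indicator region_meas),
    ← lintegral_const_mul' _ _ (ENNReal.natCast_ne_top _)]
  refine lintegral_congr fun w ↦ ?_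
  have ρ_pos : 0 < ρ w := hρ_pos w (ne_zero_of_mem_unit_sphere w)
  let R : Ioi (0 : ℝ) := ⟨(ρ w)⁻¹, inv_pos.2 ρ_pos⟩
  have indicator_ray (r : Ioi (0 : ℝ)) :
      {x | ρ x < 1}.indicator f (r.1 • w.1) = (Iio R).indicator (fun _ ↦ f w) r := by
    have mem_iff : r.1 • w.1 ∈ {x | ρ x < 1} ↔ r ∈ Iio R := by
      rw [mem_ofPred_eq, hρ_smul r.1 r.2, mem_Iio, ← Subtype.coe_lt_coe, lt_inv_comm₀ r.2 ρ_pos,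
        ← lt_inv_mul_iff₀ r.2, mul_one]
    simp only [indicator_apply, mem_iff, hf_smul r.1 r.2]
  simp only [indicator_ray]
  rw [lintegral_indicator_const measurableSet_Iio, mul_left_comm,
    natCast_mul_volumeIoiPow_pred_Iio finrank_pos, mul_comm]

theorem ofReal_abs_det_mul_lintegral_comp (L : E ≃ₗ[ℝ] E) {g : E → ℝ≥0∞} (hg : Measurable g) :
    ENNReal.ofReal |LinearMap.det (L : E →ₗ[ℝ] E)| * ∫⁻ x, g (L x) ∂μ = ∫⁻ y, g y ∂μ := by
  have det_ne : LinearMap.det (L : E →ₗ[ℝ] E) ≠ 0 := L.isUnit_det'.ne_zero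
  have L_meas : Measurable (L : E →ₗ[ℝ] E) :=
    (LinearMap.continuous_of_finiteDimensional _).measurable
  have map_eq := lintegral_map (μ := μ) hg L_meas
  rw [map_linearMap_addHaar_eq_smul_addHaar μ det_ne, lintegral_smul_measure, smul_eq_mul] at map_eq
  change _ = ∫⁻ x, g (L x) ∂μ at map_eq
  rw [← map_eq, ← mul_assoc, ← ENNReal.ofReal_mul (abs_nonneg _), ← abs_mul, mul_inv_cancel₀ det_ne,
    abs_one, ENNReal.ofReal_one, one_mul]

theorem lintegral_toSphere_comp_linearEquiv (L : E ≃ₗ[ℝ] E) {f : E → ℝ≥0∞} (hf : Measurable f)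
    (hf_smul : ∀ r > (0 : ℝ), ∀ x, f (r • x) = f x) :
    ENNReal.ofReal |LinearMap.det (L : E →ₗ[ℝ] E)| *
        ∫⁻ w : sphere (0 : E) 1, ENNReal.ofReal (‖L w‖⁻¹ ^ finrank ℝ E) * f (L w) ∂μ.toSphere =
      ∫⁻ y : sphere (0 : E) 1, f y ∂μ.toSphere := by
  have L_meas : Measurable L := L.toContinuousLinearEquiv.continuous.measurable
  have ball_meas : MeasurableSet {y : E | ‖y‖ < 1} :=
    measurableSet_lt measurable_norm measurable_const
  have ellipsoid_integral := finrank_mul_setLIntegral_gauge_lt_one μ (ρ := fun x ↦ ‖L x‖)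
    (hf.comp L_meas) (fun r hr x ↦ by simp [hf_smul r hr]) L_meas.norm
    (fun r hr x ↦ by simp [norm_smul, abs_of_pos hr]) (fun x hx ↦ by simpa using hx)
  have ball_integral := finrank_mul_setLIntegral_gauge_lt_one μ (ρ := norm) hf hf_smul
    measurable_norm (fun r hr x ↦ by simp [norm_smul, abs_of_pos hr]) (fun x hx ↦ by simpa using hx)
  have change_of_variables := ofReal_abs_det_mul_lintegral_comp μ L (hf.indicator ball_meas)
  rw [lintegral_indicator ball_meas] at change_of_variables
  calc
    _ = finrank ℝ E * (ENNReal.ofReal |LinearMap.det (L : E →ₗ[ℝ] E)| *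
          ∫⁻ x in {x | ‖L x‖ < 1}, f (L x) ∂μ) := by
      rw [mul_left_comm]; exact congrArg _ ellipsoid_integral.symm
    _ = finrank ℝ E * ∫⁻ y in {y : E | ‖y‖ < 1}, f y ∂μ := by
      rw [← change_of_variables,
        ← lintegral_indicator (measurableSet_lt L_meas.norm measurable_const)]
      rfl
    _ = _ := by simpa using ball_integral

theorem abs_det_mul_integral_toSphere_norm_rpow (L : E ≃ₗ[ℝ] E) (p : ℝ) :
    |LinearMap.det (L : E →ₗ[ℝ] E)| *
        ∫ w : sphere (0 : E) 1, ‖L w‖ ^ (-(finrank ℝ E + p)) ∂μ.toSphere =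
      ∫ y : sphere (0 : E) 1, ‖L.symm y‖ ^ p ∂μ.toSphere := by
  have L_sphere_meas : Measurable fun w : sphere (0 : E) 1 ↦ L w :=
    L.toContinuousLinearEquiv.continuous.measurable.comp measurable_subtype_coe
  have L_symm_meas : Measurable L.symm := L.symm.toContinuousLinearEquiv.continuous.measurable
  have L_symm_sphere_meas : Measurable fun y : sphere (0 : E) 1 ↦ L.symm y :=
    L_symm_meas.comp measurable_subtype_coe
  let f : E → ℝ≥0∞ := fun y ↦ ENNReal.ofReal ((‖L.symm y‖ / ‖y‖) ^ p)
  have f_meas : Measurable f := ((L_symm_meas.norm.div measurable_norm).pow_const p).ennreal_ofReal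
  have f_smul (r : ℝ) (hr : r > 0) (x : E) : f (r • x) = f x := by
    simp only [f, map_smul, norm_smul, mul_div_mul_left _ _ (norm_ne_zero_iff.2 hr.ne')]
  have f_sphere (y : sphere (0 : E) 1) : f y = ENNReal.ofReal (‖L.symm y‖ ^ p) := by
    simp [f]
  have f_comp (w : sphere (0 : E) 1) : ENNReal.ofReal (‖L w‖⁻¹ ^ finrank ℝ E) * f (L w) =
      ENNReal.ofReal (‖L w‖ ^ (-(finrank ℝ E + p))) := by
    have norm_pos : 0 < ‖L w‖ := by simpa using ne_zero_of_mem_unit_sphere w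
    simp only [f, L.symm_apply_apply, norm_eq_of_mem_sphere, one_div]
    rw [← ENNReal.ofReal_mul (by positivity), ← Real.rpow_natCast, ← Real.rpow_add (by positivity),
      Real.inv_rpow norm_pos.le, ← Real.rpow_neg norm_pos.le]
  have key := lintegral_toSphere_comp_linearEquiv μ L f_meas f_smul
  simp only [f_sphere, f_comp] at key
  rw [integral_eq_lintegral_of_nonneg_ae (.of_forall fun _ ↦ by positivity)
      (L_sphere_meas.norm.pow_const _).aestronglyMeasurable,
    integral_eq_lintegral_of_nonneg_ae (.of_forall fun _ ↦ by positivity)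
      (L_symm_sphere_meas.norm.pow_const _).aestronglyMeasurable,
    ← key, ENNReal.toReal_mul, ENNReal.toReal_ofReal (abs_nonneg _)]

end NormedSpace

section EuclideanSpace

variable {ι : Type*} [Fintype ι]

/-- The linear automorphism of Euclidean space scaling the `j`-th coordinate by `ε j`. It turns
`∑ j, ε j ^ 2 * x j ^ 2` into a squared norm. -/
noncomputable def diagonalEquiv [DecidableEq ι] (ε : ι → ℝ) (hε : ∀ j, ε j ≠ 0) :
    EuclideanSpace ℝ ι ≃ₗ[ℝ] EuclideanSpace ℝ ι :=
  .ofLinearMap (Matrix.toLpLin 2 2 (.diagonal ε)) (Matrix.toLpLin 2 2 (.diagonal ε⁻¹))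
    (by simp [← Matrix.toLpLin_mul_same, hε])
    (by simp [← Matrix.toLpLin_mul_same, hε])

theorem norm_toLpLin_diagonal_rpow [DecidableEq ι] (ε : ι → ℝ) (x : EuclideanSpace ℝ ι) (p : ℝ) :
    ‖Matrix.toLpLin 2 2 (.diagonal ε) x‖ ^ p = (∑ j, ε j ^ 2 * x j ^ 2) ^ (p / 2) := by
  rw [EuclideanSpace.norm_eq, Real.sqrt_eq_rpow, ← Real.rpow_mul (by positivity),
    one_div_mul_eq_div]
  simp [Matrix.mulVec_diagonal, mul_pow]

theorem stmt13_general (s : ℝ) (ε : ι → ℝ) (hε : ∀ j, ε j ≠ 0) :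
    |∏ j, ε j| * ∫ x : sphere (0 : EuclideanSpace ℝ ι) 1,
        (∑ j, ε j ^ 2 * x.1 j ^ 2) ^ (-((Fintype.card ι + 2 * s) / 2))
        ∂(volume : Measure (EuclideanSpace ℝ ι)).toSphere =
      ∫ y : sphere (0 : EuclideanSpace ℝ ι) 1, (∑ j, (ε j)⁻¹ ^ 2 * y.1 j ^ 2) ^ s
        ∂(volume : Measure (EuclideanSpace ℝ ι)).toSphere := by
  classical
  have key := abs_det_mul_integral_toSphere_norm_rpow volume (diagonalEquiv ε hε) (2 * s)
  simpa [diagonalEquiv, norm_toLpLin_diagonal_rpow, neg_div, -neg_add_rev] using key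

end EuclideanSpace

theorem stmt13 (k : ℕ) (hk : 1 ≤ k) (s : ℝ) (hs0 : 0 < s) (hs1 : s < 1)
    (ε : Fin k → ℝ) (hε : ∀ j, 0 < ε j) :
    (∏ j, ε j) * ∫ x : Metric.sphere (0 : EuclideanSpace ℝ (Fin k)) 1,
        (∑ j, ε j ^ 2 * ((x : EuclideanSpace ℝ (Fin k)) j) ^ 2) ^ (-(((k : ℝ) + 2 * s) / 2))
        ∂(volume : Measure (EuclideanSpace ℝ (Fin k))).toSphere =
      ∫ y : Metric.sphere (0 : EuclideanSpace ℝ (Fin k)) 1,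
        (∑ j, (ε j)⁻¹ ^ 2 * ((y : EuclideanSpace ℝ (Fin k)) j) ^ 2) ^ s
        ∂(volume : Measure (EuclideanSpace ℝ (Fin k))).toSphere := by
  simpa only [abs_of_pos (Finset.prod_pos fun j _ ↦ hε j), Fintype.card_fin] using
    stmt13_general s ε fun j ↦ (hε j).ne'
end
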